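/- Let q be a prime power and let x_1,…,x_n be nonnegative reals. The characteristic polynomial of the transition matrix of T_{G/B}(q,x) on ℂ[G/B] equals (t − λ_{[n]}(q,x)) · ∏_{S ⊊ {1,…,n}} (t − λ_S(q,x))^{m(S)}, where for S = {i_1 > i_2 > ⋯ > i_k} one sets λ_S(q,x) = ∑_{j=1}^k x_{i_j}/q^{n−i_j−j+1} (with λ_∅ = 0) and m(S) = d_{n−k}(q)·q^{(n−i_1)+(n−1−i_2)+⋯+(n−k+1−i_k)}, with d_m(q) = [m]_q!·∑_{r=0}^m (−1)^r q^{r(r−1)/2}/[r]_q! the q-derangement numbers. In particular λ_S(q,x) occurs as an eigenvalue with algebraic multiplicity m(S) for S ⊊ {1,…,n} and with multiplicity 1 for S = {1,…,n}. Moreover T_{G/B}(q,x) is diagonalizable. -/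

import Mathlib

/-!
A nonzero vector `v` acts on complete flags by moving its line to the front: every member `W` of a
flag is replaced by `⟨v⟩ + W`. In terms of flags the operator `T_{G/B}(q,x)` chooses `v` with a
weight depending only on its pivot `i`, namely `x_i / (q^(n-i) (q-1))`, and lets it act, so it is a
random walk of the kind studied by Bidigare-Hanlon-Rockmore and Brown: a word in the `v`s absorbs
every vector of its span on the right. Hence each subspace `Y` contributes as eigenvalue the total
weight of its vectors, which is `λ_S` for the pivot set `S` of `Y`, the walk satisfies a
polynomial with simple roots, and the multiplicities are found by Möbius inversion from the number
of fixed points of words. A word spanning `X` fixes `[codim X]_q!` flags, and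
`[m]_q! = ∑_Y d_{codim Y}(q)` over the subspaces `Y` of an `m`-dimensional space. Finally
the subspaces with pivot set `S` form a Schubert cell, which accounts for the power of `q`.
-/

open scoped Classical
set_option synthInstance.maxHeartbeats 1000000
set_option maxHeartbeats 1000000

noncomputable section

namespace QTsetlin

/-- `M` is upper triangular. -/
def upperTri {F : Type} [Field F] {n : ℕ} (M : Matrix (Fin n) (Fin n) F) : Prop :=
  ∀ i j : Fin n, j < i → M i j = 0

/-- `M` is lower triangular. -/
def lowerTri {F : Type} [Field F] {n : ℕ} (M : Matrix (Fin n) (Fin n) F) : Prop :=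
  ∀ i j : Fin n, i < j → M i j = 0

variable (F : Type) [Field F] [Fintype F] [DecidableEq F] (n : ℕ)

/-- The general linear group `G = GL_n(F_q)`. -/
abbrev GLn := GL (Fin n) F

/-- The Borel subgroup `B` of invertible upper triangular matrices. -/
def Bsub : Subgroup (GLn F n) where
  carrier := {g | upperTri (g : Matrix (Fin n) (Fin n) F)}
  one_mem' := by
    intro i j hij
    simp [Matrix.one_apply, (Fin.ne_of_lt hij).symm]
  mul_mem' := by
    intro a b ha hb i j hij
    exact Matrix.BlockTriangular.mul ha hb hij
  inv_mem' := by
    intro a ha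
    have hdet : IsUnit ((a : Matrix (Fin n) (Fin n) F).det) :=
      (Matrix.isUnit_iff_isUnit_det _).mp a.isUnit
    have hinv : Invertible (a : Matrix (Fin n) (Fin n) F) :=
      Matrix.invertibleOfIsUnitDet _ hdet
    have h2 : ((a : Matrix (Fin n) (Fin n) F)⁻¹).BlockTriangular (id : Fin n → Fin n) :=
      Matrix.blockTriangular_inv_of_blockTriangular ha
    show upperTri ((a⁻¹ : GLn F n) : Matrix (Fin n) (Fin n) F)
    rw [show ((a⁻¹ : GLn F n) : Matrix (Fin n) (Fin n) F)
        = (a : Matrix (Fin n) (Fin n) F)⁻¹ from Matrix.coe_units_inv a]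
    exact h2

/-- The set of cosets `G/B`. -/
abbrev Cosets := GLn F n ⧸ Bsub F n

/-- permutation matrix of `π`: entry 1 in positions `(π j, j)`. -/
def permMat (π : Equiv.Perm (Fin n)) : Matrix (Fin n) (Fin n) F :=
  fun i j => if π j = i then 1 else 0

lemma permMat_mul (π σ : Equiv.Perm (Fin n)) :
    permMat F n π * permMat F n σ = permMat F n (π * σ) := by
  ext i j
  rw [Matrix.mul_apply]
  simp only [permMat, mul_ite, ite_mul, one_mul, mul_one, mul_zero, zero_mul]
  rw [Finset.sum_eq_single (σ j)]
  · simp only [Equiv.Perm.mul_apply]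
    split_ifs <;> simp_all
  · intro k _ hk
    simp [hk.symm]
  · simp

lemma permMat_one : permMat F n 1 = 1 := by
  ext i j
  simp [permMat, Matrix.one_apply, eq_comm]

/-- The permutation matrix of `π`, as an element of `GL_n(F)`. -/
def permGL (π : Equiv.Perm (Fin n)) : GLn F n :=
  ⟨permMat F n π, permMat F n π⁻¹,
    by rw [permMat_mul, mul_inv_cancel, permMat_one],
    by rw [permMat_mul, inv_mul_cancel, permMat_one]⟩

/-- `f_i(t)`: identity matrix with an extra entry `t` in position `(r, c)`, as an
element of `GL_n(F)`. -/
def transvGL (r c : Fin n) (h : r ≠ c) (t : F) : GLn F n :=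
  ⟨Matrix.transvection r c t, Matrix.transvection r c (-t),
    by rw [Matrix.transvection_mul_transvection_same _ _ h, add_neg_cancel,
      Matrix.transvection_zero],
    by rw [Matrix.transvection_mul_transvection_same _ _ h, neg_add_cancel,
      Matrix.transvection_zero]⟩

variable (K : Type) [Field K]

/-- Matrix (row convention: row `gB` is `(gB) · T_{k+1}`) of the Hecke generator `T_{k+1}`
(paper indexing) on `ℂ[G/B]`:
`(gB)·T_i = g s_i B + ∑_{t ≠ 0} g f_i(t) B`, where `s_i` swaps (0-based) positions `k, k+1`
and `f_i(t)` has an extra entry `t` in (0-based) position `(k+1, k)`. -/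
def genGB (k : ℕ) : Matrix (Cosets F n) (Cosets F n) K := fun C D =>
  if h : k + 1 < n then
    (if (QuotientGroup.mk (C.out * permGL F n
          (Equiv.swap ⟨k, Nat.lt_of_succ_lt h⟩ ⟨k + 1, h⟩)) : Cosets F n) = D then 1 else 0)
    + ((Finset.univ.filter fun t : F => t ≠ 0 ∧
        (QuotientGroup.mk (C.out * transvGL F n ⟨k + 1, h⟩ ⟨k, Nat.lt_of_succ_lt h⟩
          (fun hc => by simp [Fin.ext_iff] at hc) t) : Cosets F n) = D).card : K)
  else 0

/-- Matrix of the product `T_k T_{k-1} ⋯ T_1` (paper indexing) on `ℂ[G/B]`. -/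
def prodGenGB : ℕ → Matrix (Cosets F n) (Cosets F n) K
  | 0 => 1
  | k + 1 => genGB F n K k * prodGenGB k

/-- The (0-based) row index of the leading entry (the pivot `1` of the distinguished coset
representative) in the first column of a representative of the coset `C`. -/
def pivotRow (C : Cosets F n) : ℕ :=
  sInf {i : ℕ | ∃ h : i < n,
    ((C.out : GLn F n) : Matrix (Fin n) (Fin n) F) ⟨i, h⟩
      ⟨0, Nat.lt_of_le_of_lt (Nat.zero_le i) h⟩ ≠ 0}

/-- Matrix of the weighting operator `X_{G/B}(q,x)`, where `q` is the cardinality of the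
field: `gB ↦ (x_i / q^{n-i}) gB` with `i` the row index of the leading 1 in the first
column of the distinguished representative of `gB`. -/
def XGB (x : Fin n → K) : Matrix (Cosets F n) (Cosets F n) K := fun C D =>
  if D = C then
    (if h : pivotRow F n C < n then
      x ⟨pivotRow F n C, h⟩ / (Fintype.card F : K) ^ (n - 1 - pivotRow F n C)
    else 0)
  else 0

/-- Matrix of the q-Tsetlin library operator
`T_{G/B}(q,x) = (∑_{i=1}^n T_{i-1} ⋯ T_1) ∘ X_{G/B}(q,x)` on `ℂ[G/B]` (row convention). -/
def TGB (x : Fin n → K) : Matrix (Cosets F n) (Cosets F n) K :=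
  (∑ k ∈ Finset.range n, prodGenGB F n K k) * XGB F n K x

/-- The coset `gB` belongs to the double coset `[π] = B⁻ π B`. -/
def inDC (π : Equiv.Perm (Fin n)) (C : Cosets F n) : Prop :=
  ∃ l b : GLn F n, lowerTri (l : Matrix (Fin n) (Fin n) F) ∧
    upperTri (b : Matrix (Fin n) (Fin n) F) ∧
    C = QuotientGroup.mk (l * permGL F n π * b)

/-- The eigenvalue `λ_S(q,x) = ∑_{j=1}^k x_{i_j} / q^{n - i_j - j + 1}` attached to a subset
`S = {i_1 > i_2 > ⋯ > i_k}` of `{1,…,n}`; for `i ∈ S`, its 1-based rank `j` in the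
decreasing order is the number of elements of `S` that are `≥ i`. -/
def lambdaS (n : ℕ) (q : K) (x : Fin n → K) (S : Finset (Fin n)) : K :=
  ∑ i ∈ S, x i /
    q ^ ((n : ℤ) - ((i : ℕ) + 1) - ((S.filter fun t => i ≤ t).card : ℤ) + 1)

/-- The q-derangement number
`d_a(q) = [a]_q! ∑_{r=0}^a (-1)^r q^{r(r-1)/2} / [r]_q!`, written as the integer
`∑_{r=0}^a (-1)^r q^{\binom r 2} ∏_{t=r+1}^a [t]_q`. -/
def qDerangeNum (q : ℕ) (a : ℕ) : ℤ :=
  ∑ r ∈ Finset.range (a + 1),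
    (-1) ^ r * (q : ℤ) ^ (r * (r - 1) / 2) *
      ∏ t ∈ Finset.Icc (r + 1) a, (∑ s ∈ Finset.range t, (q : ℤ) ^ s)

/-- The multiplicity `m(S) = d_{n-k}(q) ⋅ q^{(n-i_1) + (n-1-i_2) + ⋯ + (n-k+1-i_k)}` of the
eigenvalue `λ_S(q,x)` for a proper subset `S = {i_1 > ⋯ > i_k} ⊊ {1,…,n}`; the summand for
the element of 1-based rank `j` is `n - j + 1 - i_j`. -/
def multGB (q n : ℕ) (S : Finset (Fin n)) : ℕ :=
  (qDerangeNum q (n - S.card)).toNat *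
    q ^ (∑ i ∈ S, (n - ((i : ℕ) + 1) - ((S.filter fun t => i ≤ t).card - 1)))

section LinearAlgebra

open Polynomial

variable {K : Type*} [Field K]

theorem ker_aeval_prod_X_sub_C {V : Type*} [AddCommGroup V] [Module K V] (f : Module.End K V)
    (s : Finset K) :
    (aeval f (∏ a ∈ s, (X - C a))).ker = ⨆ a ∈ s, f.eigenspace a := by
  induction s using Finset.induction_on with
  | empty => simp [Module.End.one_eq_id]
  | insert a s ha ih =>
    have hcop : IsCoprime (X - C a) (∏ b ∈ s, (X - C b)) :=
      IsCoprime.prod_right fun b hb =>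
        isCoprime_X_sub_C_of_isUnit_sub (sub_ne_zero.mpr (ne_of_mem_of_not_mem hb ha).symm).isUnit
    rw [Finset.prod_insert ha, ← sup_ker_aeval_eq_ker_aeval_mul_of_coprime f hcop, ih,
      Finset.iSup_insert, Module.End.eigenspace_def, map_sub, aeval_X, aeval_C,
      Algebra.algebraMap_eq_smul_one]

theorem iSup_eigenspace_eq_top_of_aeval_eq_zero {V : Type*} [AddCommGroup V] [Module K V]
    {f : Module.End K V} {s : Finset K} (h : aeval f (∏ a ∈ s, (X - C a)) = 0) :
    ⨆ a, f.eigenspace a = ⊤ := by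
  rw [← top_le_iff, ← LinearMap.ker_eq_top.mpr h, ker_aeval_prod_X_sub_C]
  exact iSup₂_le fun a _ => le_iSup f.eigenspace a

theorem exists_basis_eigenvectors {α : Type*} [Finite α] {f : Module.End K (α → K)}
    (h : ⨆ a, f.eigenspace a = ⊤) :
    ∃ (b : Module.Basis α K (α → K)) (d : α → K), ∀ i, f (b i) = d i • b i := by
  have hint : DirectSum.IsInternal f.eigenspace :=
    DirectSum.isInternal_submodule_of_iSupIndep_of_iSup_eq_top f.eigenspaces_iSupIndep h
  let b := hint.collectedBasis fun a => Module.finBasis K (f.eigenspace a)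
  let e := b.indexEquiv (Pi.basisFun K α)
  refine ⟨b.reindex e, fun i => (e.symm i).1, fun i => ?_⟩
  rw [Module.Basis.reindex_apply]
  exact Module.End.mem_eigenspace_iff.mp (hint.collectedBasis_mem _ _)

theorem exists_eq_mul_diagonal_mul_inv_of_aeval_eq_zero {α : Type*} [Fintype α]
    [DecidableEq α] {T : Matrix α α K} {s : Finset K}
    (h : aeval T (∏ a ∈ s, (X - C a)) = 0) :
    ∃ (P : Matrix α α K) (d : α → K), IsUnit P.det ∧ T = P * Matrix.diagonal d * P⁻¹ := by
  have hann : aeval (Matrix.toLin' T) (∏ a ∈ s, (X - C a)) = 0 := by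
    have := aeval_algHom_apply (Matrix.toLinAlgEquiv' (R := K) (n := α)).toAlgHom T
      (∏ a ∈ s, (X - C a))
    rw [h, map_zero] at this
    exact this
  obtain ⟨b, d, hb⟩ :=
    exists_basis_eigenvectors (iSup_eigenspace_eq_top_of_aeval_eq_zero hann)
  set P := (Pi.basisFun K α).toMatrix b with hPdef
  have hP : IsUnit P.det := by
    rw [hPdef, ← Module.Basis.det_apply]
    exact (Pi.basisFun K α).isUnit_det b
  refine ⟨P, d, hP, ?_⟩
  have hTP : T * P = P * Matrix.diagonal d := by
    ext i j
    rw [Matrix.mul_diagonal, mul_comm]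
    exact congrFun (hb j) i
  rw [← hTP, Matrix.mul_nonsing_inv_cancel_right _ _ hP]

variable {α κ : Type*} [Fintype α] [Fintype κ] {d : α → K} {m : κ → ℕ} {c : κ → K}

theorem sum_eval_eq_of_sum_pow_eq
    (h : ∀ k : ℕ, ∑ i, d i ^ k = ∑ y, (m y : K) * c y ^ k) (p : K[X]) :
    ∑ i, p.eval (d i) = ∑ y, (m y : K) * p.eval (c y) := by
  simp_rw [eval_eq_sum_range, Finset.mul_sum]
  rw [Finset.sum_comm, Finset.sum_comm (s := (Finset.univ : Finset κ))]
  refine Finset.sum_congr rfl fun k _ => ?_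
  simp_rw [mul_left_comm _ (p.coeff k), ← Finset.mul_sum, h]

theorem card_filter_eq_of_sum_pow_eq [CharZero K] [DecidableEq K]
    (h : ∀ k : ℕ, ∑ i, d i ^ k = ∑ y, (m y : K) * c y ^ k) (a : K) :
    (Finset.univ.filter fun i => d i = a).card = ∑ y with c y = a, m y := by
  set s : Finset K := insert a (Finset.univ.image d ∪ Finset.univ.image c)
  have heval : ∀ b ∈ s, (Lagrange.basis s id a).eval b = if b = a then 1 else 0 := by
    intro b hb
    split_ifs with hba
    · subst hba
      exact Lagrange.eval_basis_self Function.injective_id.injOn hb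
    · exact Lagrange.eval_basis_of_ne (v := id) (Ne.symm hba) hb
  have hsum := sum_eval_eq_of_sum_pow_eq h (Lagrange.basis s id a)
  rw [Finset.sum_congr rfl fun i _ => heval (d i) (by simp [s]),
    Finset.sum_congr rfl fun y _ => congrArg ((m y : K) * ·) (heval (c y) (by simp [s]))] at hsum
  simp only [mul_ite, mul_one, mul_zero, ← Finset.sum_filter, Finset.sum_const,
    nsmul_eq_mul] at hsum
  exact_mod_cast hsum

theorem prod_X_sub_C_eq_of_sum_pow_eq [CharZero K]
    (h : ∀ k : ℕ, ∑ i, d i ^ k = ∑ y, (m y : K) * c y ^ k) :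
    ∏ i, (X - C (d i)) = ∏ y, (X - C (c y)) ^ m y := by
  classical
  set s : Finset K := Finset.univ.image d ∪ Finset.univ.image c
  have hd : ∀ i ∈ Finset.univ, d i ∈ s := by simp [s]
  have hc : ∀ y ∈ Finset.univ, c y ∈ s := by simp [s]
  rw [← Finset.prod_fiberwise_of_maps_to hd, ← Finset.prod_fiberwise_of_maps_to hc]
  refine Finset.prod_congr rfl fun a _ => ?_
  rw [Finset.prod_congr rfl fun i hi => by rw [(Finset.mem_filter.mp hi).2], Finset.prod_const,
    card_filter_eq_of_sum_pow_eq h, ← Finset.prod_pow_eq_pow_sum]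
  exact Finset.prod_congr rfl fun y hy => by rw [(Finset.mem_filter.mp hy).2]

theorem charpoly_eq_of_trace_pow_eq [CharZero K] [DecidableEq α] {T P : Matrix α α K}
    (hP : IsUnit P.det) (hT : T = P * Matrix.diagonal d * P⁻¹)
    (htr : ∀ k : ℕ, (T ^ k).trace = ∑ y, (m y : K) * c y ^ k) :
    T.charpoly = ∏ y, (X - C (c y)) ^ m y := by
  obtain ⟨u, rfl⟩ := (Matrix.isUnit_iff_isUnit_det P).mpr hP
  have hpow : ∀ k : ℕ, (T ^ k).trace = ∑ i, d i ^ k := fun k => by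
    rw [hT, ← Matrix.coe_units_inv, Units.conj_pow, Matrix.trace_units_conj,
      Matrix.diagonal_pow, Matrix.trace_diagonal]
    rfl
  rw [hT, Matrix.charpoly_units_conj,
    Matrix.charpoly_diagonal]
  exact prod_X_sub_C_eq_of_sum_pow_eq fun k => by rw [← hpow, htr]

end LinearAlgebra

section RandomWalk

open Polynomial

variable {ι α L : Type*}

/-- The state reached from `a` when the letters of a word act one after the other, the head of the
list first. -/
def wordAct (act : ι → α → α) (l : List ι) (a : α) : α :=
  l.foldl (fun b v => act v b) a

/-- The support of a word: the join of the supports of its letters. -/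
def wordSupp [SemilatticeSup L] [OrderBot L] (supp : ι → L) (l : List ι) : L :=
  l.foldr (fun v X => supp v ⊔ X) ⊥

theorem wordSupp_cons [SemilatticeSup L] [OrderBot L] (supp : ι → L) (v : ι) (l : List ι) :
    wordSupp supp (v :: l) = supp v ⊔ wordSupp supp l :=
  rfl

/-- The transition matrix of a map `f`, with the row convention: row `a` is the unit vector at
`f a`. -/
def mapMatrix (R : Type*) [Zero R] [One R] [DecidableEq α] (f : α → α) : Matrix α α R :=
  (1 : Matrix α α R).submatrix f id

/-- The transition matrix of the random walk which lets a letter `v`, chosen with weight `w v`,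
act on the current state. -/
def walkMatrix {R : Type*} [Semiring R] [Fintype ι] [DecidableEq α] (act : ι → α → α)
    (w : ι → R) : Matrix α α R :=
  ∑ v, w v • mapMatrix R (act v)

/-- The total weight of the letters supported below `Y`; these sums are the eigenvalues of
`walkMatrix`. -/
def weightBelow {R : Type*} [AddCommMonoid R] [Fintype ι] [LE L] (supp : ι → L) (w : ι → R)
    (Y : L) : R :=
  ∑ v with supp v ≤ Y, w v

section Semiring

variable {R : Type*} [DecidableEq α]

theorem mapMatrix_id [Zero R] [One R] : mapMatrix R (id : α → α) = 1 :=
  Matrix.submatrix_id_id 1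

theorem mapMatrix_apply [Zero R] [One R] (f : α → α) (a b : α) :
    mapMatrix R f a b = if f a = b then 1 else 0 :=
  Matrix.one_apply

variable [Fintype α]

theorem mapMatrix_mul [NonAssocSemiring R] (f g : α → α) :
    mapMatrix R f * mapMatrix R g = mapMatrix R (g ∘ f) :=
  Matrix.one_submatrix_mul f (Equiv.refl α) _

theorem trace_mapMatrix [NonAssocSemiring R] (f : α → α) :
    (mapMatrix R f).trace = (Fintype.card (Function.fixedPoints f) : R) := by
  simp [mapMatrix_apply, Matrix.trace, Fintype.card_subtype, Function.mem_fixedPoints,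
    Function.IsFixedPt]

theorem walkMatrix_mul_mapMatrix_wordAct [Semiring R] [Fintype ι] (act : ι → α → α) (w : ι → R)
    (l : List ι) :
    walkMatrix act w * mapMatrix R (wordAct act l) =
      ∑ v, w v • mapMatrix R (wordAct act (v :: l)) := by
  simp_rw [walkMatrix, Finset.sum_mul, Matrix.smul_mul, mapMatrix_mul]
  rfl

end Semiring

theorem weightBelow_lt_weightBelow {R : Type*} [AddCommMonoid R] [PartialOrder R]
    [IsOrderedCancelAddMonoid R] [Fintype ι] [Preorder L] {supp : ι → L} {w : ι → R}
    (hw : ∀ v, 0 ≤ w v) {X Y : L} (hXY : X ≤ Y) {v : ι} (hvY : supp v ≤ Y) (hvX : ¬ supp v ≤ X)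
    (hv : w v ≠ 0) : weightBelow supp w X < weightBelow supp w Y := by
  refine Finset.sum_lt_sum_of_subset (i := v) (fun u hu => ?_) (by simpa) (by simpa)
    ((hw v).lt_of_ne' hv) fun u _ _ => hw u
  simpa using (by simpa using hu : supp u ≤ X).trans hXY

variable [Fintype ι] [Fintype α] [DecidableEq α] [SemilatticeSup L] [OrderBot L]
  {act : ι → α → α} {supp : ι → L}

theorem trace_walkMatrix_pow_mul_mapMatrix [Fintype L] {R : Type*} [CommSemiring R] {m : L → ℕ}
    (hfix : ∀ l, Fintype.card (Function.fixedPoints (wordAct act l)) =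
      ∑ Y with wordSupp supp l ≤ Y, m Y)
    (w : ι → R) (k : ℕ) (l : List ι) :
    (walkMatrix act w ^ k * mapMatrix R (wordAct act l)).trace =
      ∑ Y with wordSupp supp l ≤ Y, (m Y : R) * weightBelow supp w Y ^ k := by
  induction k generalizing l with
  | zero => simp [trace_mapMatrix, hfix]
  | succ k ih =>
    rw [pow_succ, mul_assoc, walkMatrix_mul_mapMatrix_wordAct, Finset.mul_sum, Matrix.trace_sum]
    simp_rw [Matrix.mul_smul, Matrix.trace_smul, ih, smul_eq_mul, Finset.mul_sum]
    rw [Finset.sum_comm' (t' := Finset.univ.filter fun Y => wordSupp supp l ≤ Y)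
      (s' := fun Y => Finset.univ.filter fun v => supp v ≤ Y)
      fun v Y => by simp [wordSupp_cons]]
    refine Finset.sum_congr rfl fun Y _ => ?_
    rw [← Finset.sum_mul, ← weightBelow, pow_succ]
    ring

variable {K : Type*} [Field K]

theorem walkMatrix_sub_mul_mapMatrix
    (hact : ∀ l v a, supp v ≤ wordSupp supp l → wordAct act l (act v a) = wordAct act l a)
    (w : ι → K) (l : List ι) :
    (walkMatrix act w - algebraMap K _ (weightBelow supp w (wordSupp supp l))) *
        mapMatrix K (wordAct act l) =
      ∑ v with ¬ supp v ≤ wordSupp supp l, w v • mapMatrix K (wordAct act (v :: l)) := by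
  rw [sub_mul, walkMatrix_mul_mapMatrix_wordAct, sub_eq_iff_eq_add',
    ← Finset.sum_filter_add_sum_filter_not _ fun v => supp v ≤ wordSupp supp l,
    Algebra.algebraMap_eq_smul_one, smul_mul_assoc, one_mul, weightBelow, Finset.sum_smul]
  congr 1
  refine Finset.sum_congr rfl fun v hv => ?_
  rw [show wordAct act (v :: l) = wordAct act l from
    funext fun a => hact l v a (Finset.mem_filter.mp hv).2]

variable [PartialOrder K] [IsStrictOrderedRing K] {w : ι → K}

theorem aeval_walkMatrix_mul_mapMatrix_eq_zero [Fintype L] (hw : ∀ v, 0 ≤ w v)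
    (hact : ∀ l v a, supp v ≤ wordSupp supp l → wordAct act l (act v a) = wordAct act l a)
    (l : List ι) :
    aeval (walkMatrix act w)
        (∏ a ∈ (Finset.univ.filter (wordSupp supp l ≤ ·)).image (weightBelow supp w), (X - C a)) *
      mapMatrix K (wordAct act l) = 0 := by
  induction hX : wordSupp supp l using WellFoundedGT.induction generalizing l with
  | ind Z ih =>
  subst hX
  set s := (Finset.univ.filter (wordSupp supp l ≤ ·)).image (weightBelow supp w)
  have hmem : weightBelow supp w (wordSupp supp l) ∈ s :=
    Finset.mem_image_of_mem _ (by simp)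
  rw [← Finset.prod_erase_mul s _ hmem, map_mul, mul_assoc, map_sub, aeval_X, aeval_C,
    walkMatrix_sub_mul_mapMatrix hact, Finset.mul_sum]
  refine Finset.sum_eq_zero fun v hv => ?_
  have hv : ¬ supp v ≤ wordSupp supp l := (Finset.mem_filter.mp hv).2
  rw [mul_smul_comm]
  by_cases hwv : w v = 0
  · rw [hwv, zero_smul]
  have hlt : wordSupp supp l < wordSupp supp (v :: l) := right_lt_sup.mpr hv
  have hsub : (Finset.univ.filter (wordSupp supp (v :: l) ≤ ·)).image (weightBelow supp w) ⊆
      s.erase (weightBelow supp w (wordSupp supp l)) := by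
    intro a ha
    obtain ⟨Y, hY, rfl⟩ := Finset.mem_image.mp ha
    have hY : wordSupp supp (v :: l) ≤ Y := (Finset.mem_filter.mp hY).2
    have hlY := hlt.le.trans hY
    exact Finset.mem_erase.mpr
      ⟨(weightBelow_lt_weightBelow hw hlY (le_sup_left.trans hY) hv hwv).ne',
        Finset.mem_image_of_mem _ (by simpa using hlY)⟩
  rw [← Finset.prod_sdiff hsub, map_mul, mul_assoc, ih _ hlt _ rfl, mul_zero, smul_zero]

theorem exists_walkMatrix_eq_mul_diagonal_mul_inv [Finite L] (hw : ∀ v, 0 ≤ w v)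
    (hact : ∀ l v a, supp v ≤ wordSupp supp l → wordAct act l (act v a) = wordAct act l a) :
    ∃ (P : Matrix α α K) (d : α → K),
      IsUnit P.det ∧ walkMatrix act w = P * Matrix.diagonal d * P⁻¹ := by
  cases nonempty_fintype L
  have h := aeval_walkMatrix_mul_mapMatrix_eq_zero hw hact []
  rw [show wordAct act [] = id from rfl, mapMatrix_id, mul_one] at h
  exact exists_eq_mul_diagonal_mul_inv_of_aeval_eq_zero h

theorem charpoly_walkMatrix [Fintype L] (hw : ∀ v, 0 ≤ w v)
    (hact : ∀ l v a, supp v ≤ wordSupp supp l → wordAct act l (act v a) = wordAct act l a)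
    {m : L → ℕ}
    (hfix : ∀ l, Fintype.card (Function.fixedPoints (wordAct act l)) =
      ∑ Y with wordSupp supp l ≤ Y, m Y) :
    (walkMatrix act w).charpoly = ∏ Y, (X - C (weightBelow supp w Y)) ^ m Y := by
  obtain ⟨P, d, hP, hT⟩ := exists_walkMatrix_eq_mul_diagonal_mul_inv hw hact
  refine charpoly_eq_of_trace_pow_eq hP hT fun k => ?_
  have h := trace_walkMatrix_pow_mul_mapMatrix hfix w k []
  rw [show wordAct act [] = id from rfl, mapMatrix_id, mul_one,
    Finset.filter_true_of_mem fun Y _ => show wordSupp supp [] ≤ Y from bot_le] at h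
  exact h

end RandomWalk

section SubspaceDecomposition

variable {F : Type*} [Field F] {V : Type*} [AddCommGroup V] [Module F V]

instance fintypeSubmodule [Finite V] : Fintype (Submodule F V) :=
  Fintype.ofFinite _

instance finiteQuotient [Finite V] (Y : Submodule F V) : Finite (V ⧸ Y) :=
  Finite.of_surjective _ Y.mkQ_surjective

/-- The subspace of `F × V` whose intersection with `V` is `Y` and which contains the vectors
`(1, u)` with `u` in the coset `c`. These are the subspaces of `F × V` not contained in `V`. -/
def slopeSubmodule (Y : Submodule F V) (c : V ⧸ Y) : Submodule F (F × V) :=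
  LinearMap.eqLocus (Y.mkQ ∘ₗ LinearMap.snd F F V) ((LinearMap.fst F F V).smulRight c)

theorem mem_slopeSubmodule {Y : Submodule F V} {c : V ⧸ Y} {p : F × V} :
    p ∈ slopeSubmodule Y c ↔ Y.mkQ p.2 = p.1 • c :=
  Iff.rfl

theorem comap_inr_slopeSubmodule (Y : Submodule F V) (c : V ⧸ Y) :
    (slopeSubmodule Y c).comap (LinearMap.inr F F V) = Y := by
  ext u
  simp [mem_slopeSubmodule]

theorem comap_inr_bot_prod (Y : Submodule F V) :
    ((⊥ : Submodule F F).prod Y).comap (LinearMap.inr F F V) = Y :=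
  SetLike.ext fun _ => ⟨And.right, fun hu => ⟨rfl, hu⟩⟩

theorem exists_one_mem_slopeSubmodule (Y : Submodule F V) (c : V ⧸ Y) :
    ∃ u, (1, u) ∈ slopeSubmodule Y c := by
  obtain ⟨u, rfl⟩ := Y.mkQ_surjective c
  exact ⟨u, (one_smul F _).symm⟩

theorem bot_prod_ne_slopeSubmodule (Y Z : Submodule F V) (c : V ⧸ Z) :
    (⊥ : Submodule F F).prod Y ≠ slopeSubmodule Z c := fun h => by
  obtain ⟨u, hu⟩ := exists_one_mem_slopeSubmodule Z c
  rw [← h] at hu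
  exact one_ne_zero hu.1

theorem eq_bot_prod_or_eq_slopeSubmodule (W : Submodule F (F × V)) :
    (∃ Y : Submodule F V, (⊥ : Submodule F F).prod Y = W) ∨ ∃ Y c, slopeSubmodule Y c = W := by
  by_cases h : ∃ p ∈ W, p.1 ≠ 0
  · obtain ⟨⟨b, v⟩, hp, hb⟩ := h
    have hv : ((1, b⁻¹ • v) : F × V) ∈ W := by
      simpa [hb] using W.smul_mem b⁻¹ hp
    refine Or.inr ⟨W.comap (LinearMap.inr F F V), Submodule.mkQ _ (b⁻¹ • v), ?_⟩
    ext ⟨a, u⟩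
    have hsub : ((0, u - a • b⁻¹ • v) : F × V) = (a, u) - a • (1, b⁻¹ • v) := by simp
    rw [mem_slopeSubmodule, ← map_smul, ← sub_eq_zero, ← map_sub, Submodule.mkQ_apply,
      Submodule.Quotient.mk_eq_zero, Submodule.mem_comap, LinearMap.inr_apply, hsub,
      W.sub_mem_iff_left (W.smul_mem a hv)]
  · push Not at h
    refine Or.inl ⟨W.comap (LinearMap.inr F F V), ?_⟩
    ext ⟨a, u⟩
    simp only [Submodule.mem_prod, Submodule.mem_bot, Submodule.mem_comap, LinearMap.inr_apply]
    exact ⟨fun ⟨ha, hu⟩ => ha ▸ hu, fun hau => ⟨h _ hau, h _ hau ▸ hau⟩⟩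

theorem bijective_bot_prod_slopeSubmodule :
    Function.Bijective (Sum.elim (fun Y => (⊥ : Submodule F F).prod Y)
      fun p : Σ Y : Submodule F V, V ⧸ Y => slopeSubmodule p.1 p.2) := by
  constructor
  · rintro (Y | ⟨Y, c⟩) (Z | ⟨Z, d⟩) h <;> simp only [Sum.elim_inl, Sum.elim_inr] at h
    · rw [← comap_inr_bot_prod Y, h, comap_inr_bot_prod]
    · exact absurd h (bot_prod_ne_slopeSubmodule _ _ _)
    · exact absurd h.symm (bot_prod_ne_slopeSubmodule _ _ _)
    · obtain rfl : Y = Z := by rw [← comap_inr_slopeSubmodule Y c, h, comap_inr_slopeSubmodule]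
      obtain ⟨u, hu⟩ := exists_one_mem_slopeSubmodule Y c
      have hud := h ▸ hu
      rw [mem_slopeSubmodule, one_smul] at hu hud
      rw [← hu, hud]
  · intro W
    obtain ⟨Y, rfl⟩ | ⟨Y, c, rfl⟩ := eq_bot_prod_or_eq_slopeSubmodule W
    exacts [⟨Sum.inl Y, rfl⟩, ⟨Sum.inr ⟨Y, c⟩, rfl⟩]

@[to_additive sum_submodule_prod]
theorem prod_submodule_prod {M : Type*} [CommMonoid M] [Finite F] [Fintype V]
    (f : Submodule F (F × V) → M) :
    ∏ W, f W = (∏ Y : Submodule F V, f ((⊥ : Submodule F F).prod Y)) *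
      ∏ Y : Submodule F V, ∏ c : V ⧸ Y, f (slopeSubmodule Y c) := by
  rw [← bijective_bot_prod_slopeSubmodule.prod_comp f, Fintype.prod_sum_type,
    Fintype.prod_sigma]
  rfl

theorem finrank_quotient_bot_prod [FiniteDimensional F V] (Y : Submodule F V) :
    Module.finrank F ((F × V) ⧸ (⊥ : Submodule F F).prod Y) =
      Module.finrank F (V ⧸ Y) + 1 := by
  let f : F × V →ₗ[F] F × (V ⧸ Y) := LinearMap.id.prodMap Y.mkQ
  have hker : f.ker = (⊥ : Submodule F F).prod Y := by
    rw [LinearMap.ker_prodMap, LinearMap.ker_id, Submodule.ker_mkQ]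
  have hsurj : Function.Surjective f := Function.surjective_id.prodMap Y.mkQ_surjective
  rw [← hker, (f.quotKerEquivOfSurjective hsurj).finrank_eq, Module.finrank_prod,
    Module.finrank_self, add_comm]

theorem finrank_quotient_slopeSubmodule (Y : Submodule F V) (c : V ⧸ Y) :
    Module.finrank F ((F × V) ⧸ slopeSubmodule Y c) = Module.finrank F (V ⧸ Y) := by
  let f : F × V →ₗ[F] V ⧸ Y :=
    Y.mkQ ∘ₗ LinearMap.snd F F V - (LinearMap.fst F F V).smulRight c
  have hker : f.ker = slopeSubmodule Y c := (LinearMap.eqLocus_eq_ker_sub _ _).symm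
  have hsurj : Function.Surjective f := fun d => by
    obtain ⟨u, rfl⟩ := Y.mkQ_surjective d
    exact ⟨(0, u), by simp [f]⟩
  rw [← hker, (f.quotKerEquivOfSurjective hsurj).finrank_eq]

end SubspaceDecomposition

theorem card_filter_mem_and_notMem {F V : Type*} [Field F] [Fintype F] [AddCommGroup V]
    [Module F V] [Fintype V] {X Y : Submodule F V} (hXY : X ≤ Y) :
    (Finset.univ.filter fun v => v ∈ Y ∧ v ∉ X).card =
      Fintype.card F ^ Module.finrank F Y - Fintype.card F ^ Module.finrank F X := by
  have hcard : ∀ W : Submodule F V,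
      (Finset.univ.filter fun v => v ∈ W).card = Fintype.card F ^ Module.finrank F W := fun W =>
    (Fintype.card_subtype _).symm.trans Module.card_eq_pow_finrank
  rw [← hcard, ← hcard, ← Finset.card_sdiff_of_subset
    (Finset.monotone_filter_right _ fun _ _ hv => hXY hv), Finset.filter_and_not]

section Pivots

variable {F : Type*} [Field F] {n : ℕ}

/-- `i` is the position of the first nonzero entry of `v`. -/
def IsPivot (v : Fin n → F) (i : Fin n) : Prop :=
  v i ≠ 0 ∧ ∀ j < i, v j = 0

/-- The pivot set of a subspace of `F^n`: the positions of the first nonzero entries of its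
vectors. -/
def pivots (Y : Submodule F (Fin n → F)) : Finset (Fin n) :=
  Finset.univ.filter fun i => ∃ v ∈ Y, IsPivot v i

theorem mem_pivots {Y : Submodule F (Fin n → F)} {i : Fin n} :
    i ∈ pivots Y ↔ ∃ v ∈ Y, IsPivot v i := by
  simp [pivots]

theorem exists_isPivot {v : Fin n → F} (hv : v ≠ 0) : ∃ i, IsPivot v i := by
  obtain ⟨i, hi⟩ := Function.ne_iff.mp hv
  obtain ⟨k, hk, hmin⟩ := Set.exists_min_image {i | v i ≠ 0} id (Set.toFinite _) ⟨i, hi⟩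
  exact ⟨k, hk, fun j hj => by_contra fun h => (hmin j h).not_gt hj⟩

theorem IsPivot.eq {v : Fin n → F} {i j : Fin n} (hi : IsPivot v i) (hj : IsPivot v j) : i = j :=
  le_antisymm (le_of_not_gt fun h => hj.1 (hi.2 j h)) (le_of_not_gt fun h => hi.1 (hj.2 i h))

/-- The vectors of `Y` whose entries in the positions `j < i` vanish. -/
def vanishBelow (Y : Submodule F (Fin n → F)) (i : ℕ) : Submodule F (Fin n → F) :=
  Y ⊓ ⨅ (j : Fin n) (_ : (j : ℕ) < i), LinearMap.ker (LinearMap.proj j)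

theorem mem_vanishBelow {Y : Submodule F (Fin n → F)} {i : ℕ} {v : Fin n → F} :
    v ∈ vanishBelow Y i ↔ v ∈ Y ∧ ∀ j : Fin n, (j : ℕ) < i → v j = 0 := by
  simp [vanishBelow]

theorem mem_vanishBelow_succ {Y : Submodule F (Fin n → F)} {i : Fin n} {v : Fin n → F} :
    v ∈ vanishBelow Y (i + 1) ↔ v ∈ vanishBelow Y i ∧ v i = 0 := by
  simp only [mem_vanishBelow, Nat.lt_succ_iff_lt_or_eq, or_imp, forall_and, and_assoc,
    Fin.val_inj, forall_eq]

theorem finrank_vanishBelow_succ (Y : Submodule F (Fin n → F)) (i : Fin n) :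
    Module.finrank F (vanishBelow Y (i + 1)) + (if i ∈ pivots Y then 1 else 0) =
      Module.finrank F (vanishBelow Y i) := by
  let f : vanishBelow Y i →ₗ[F] F := (LinearMap.proj i).domRestrict (vanishBelow Y i)
  have hker : Module.finrank F f.ker = Module.finrank F (vanishBelow Y (i + 1)) := by
    have hmap : f.ker.map (vanishBelow Y i).subtype = vanishBelow Y (i + 1) := by
      ext v
      simp [mem_vanishBelow_succ, f, and_comm]
    rw [← hmap, Submodule.finrank_map_subtype_eq]
  have hrange : Module.finrank F f.range = if i ∈ pivots Y then 1 else 0 := by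
    split_ifs with hi
    · obtain ⟨v, hv, hvi, hlt⟩ := mem_pivots.mp hi
      have hf : f ≠ 0 := fun h =>
        hvi (LinearMap.congr_fun h ⟨v, mem_vanishBelow.mpr ⟨hv, hlt⟩⟩)
      rw [LinearMap.range_eq_top.mpr (LinearMap.surjective hf), finrank_top, Module.finrank_self]
    · have hf : f = 0 := LinearMap.ext fun v => by_contra fun hvi =>
        hi (mem_pivots.mpr ⟨v, (mem_vanishBelow.mp v.2).1, hvi, (mem_vanishBelow.mp v.2).2⟩)
      rw [hf, LinearMap.range_zero, finrank_bot]
  rw [← f.finrank_range_add_finrank_ker, hker, hrange, add_comm]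

theorem finrank_vanishBelow (Y : Submodule F (Fin n → F)) {i : ℕ} (hi : i ≤ n) :
    Module.finrank F (vanishBelow Y i) = ((pivots Y).filter fun j : Fin n => i ≤ (j : ℕ)).card := by
  induction hi using Nat.decreasingInduction with
  | self =>
    have hbot : vanishBelow Y n = ⊥ := by
      refine (Submodule.eq_bot_iff _).mpr fun v hv => funext fun j => ?_
      exact (mem_vanishBelow.mp hv).2 j j.2
    rw [hbot, finrank_bot, Finset.filter_false_of_mem fun j _ => not_le.mpr j.2, Finset.card_empty]
  | of_succ k hk ih =>
    rw [← finrank_vanishBelow_succ Y ⟨k, hk⟩, ih]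
    have hsplit : ((pivots Y).filter fun j : Fin n => k ≤ (j : ℕ)) =
        ((pivots Y).filter fun j : Fin n => k + 1 ≤ (j : ℕ)) ∪
          (pivots Y).filter fun j => j = ⟨k, hk⟩ := by
      rw [← Finset.filter_or]
      exact Finset.filter_congr fun j _ => by simp only [Fin.ext_iff]; omega
    rw [hsplit, Finset.card_union_of_disjoint, Finset.filter_eq', apply_ite Finset.card,
      Finset.card_singleton, Finset.card_empty]
    exact Finset.disjoint_filter.mpr fun j _ hj h => by rw [h] at hj; exact absurd hj (by simp)

theorem finrank_eq_card_pivots (Y : Submodule F (Fin n → F)) :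
    Module.finrank F Y = (pivots Y).card := by
  have htop : vanishBelow Y 0 = Y := by
    ext v
    simp [mem_vanishBelow]
  have h := finrank_vanishBelow Y (Nat.zero_le n)
  rwa [htop, Finset.filter_true_of_mem fun j _ => Nat.zero_le _] at h

theorem isPivot_cons_zero {a : F} {u : Fin n → F} :
    IsPivot (Fin.cons a u : Fin (n + 1) → F) 0 ↔ a ≠ 0 := by
  simp [IsPivot]

theorem isPivot_cons_succ {a : F} {u : Fin n → F} {i : Fin n} :
    IsPivot (Fin.cons a u : Fin (n + 1) → F) i.succ ↔ a = 0 ∧ IsPivot u i := by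
  simp [IsPivot, Fin.forall_fin_succ, and_left_comm]

/-- The subspaces of `F × F^n` are those of `F^(n+1)`. -/
def consSubmodule (F : Type*) [Field F] (n : ℕ) :
    Submodule F (F × (Fin n → F)) ≃o Submodule F (Fin (n + 1) → F) :=
  Submodule.orderIsoMapComap (Fin.consLinearEquiv F fun _ : Fin (n + 1) => F)

theorem mem_pivots_consSubmodule {W : Submodule F (F × (Fin n → F))} {i : Fin (n + 1)} :
    i ∈ pivots (consSubmodule F n W) ↔
      ∃ a u, (a, u) ∈ W ∧ IsPivot (Fin.cons a u : Fin (n + 1) → F) i := by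
  simp only [mem_pivots, consSubmodule, Submodule.orderIsoMapComap_apply, Submodule.mem_map,
    Prod.exists]
  constructor
  · rintro ⟨_, ⟨a, u, hau, rfl⟩, hv⟩
    exact ⟨a, u, hau, hv⟩
  · rintro ⟨a, u, hau, hv⟩
    exact ⟨_, ⟨a, u, hau, rfl⟩, hv⟩

theorem pivots_consSubmodule_bot_prod (Y : Submodule F (Fin n → F)) :
    pivots (consSubmodule F n ((⊥ : Submodule F F).prod Y)) =
      (pivots Y).map (Fin.succEmb n) := by
  ext i
  cases i using Fin.cases with
  | zero =>
    simp only [mem_pivots_consSubmodule, isPivot_cons_zero, Submodule.mem_prod, Submodule.mem_bot]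
    simp +contextual
  | succ i =>
    simp only [mem_pivots_consSubmodule, isPivot_cons_succ, Submodule.mem_prod, Submodule.mem_bot]
    simp [mem_pivots]

theorem pivots_consSubmodule_slopeSubmodule (Y : Submodule F (Fin n → F))
    (c : (Fin n → F) ⧸ Y) :
    pivots (consSubmodule F n (slopeSubmodule Y c)) =
      insert 0 ((pivots Y).map (Fin.succEmb n)) := by
  ext i
  cases i using Fin.cases with
  | zero =>
    obtain ⟨u, hu⟩ := exists_one_mem_slopeSubmodule Y c
    simp only [mem_pivots_consSubmodule, isPivot_cons_zero, Finset.mem_insert_self, iff_true]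
    exact ⟨1, u, hu, one_ne_zero⟩
  | succ i =>
    rw [mem_pivots_consSubmodule]
    simp [isPivot_cons_succ, mem_pivots, mem_slopeSubmodule]

variable [Fintype F]

theorem card_filter_isPivot_mul_card (Y : Submodule F (Fin n → F)) {i : Fin n}
    (hi : i ∈ pivots Y) :
    (Finset.univ.filter fun v => v ∈ Y ∧ IsPivot v i).card * Fintype.card F =
      (Fintype.card F - 1) * Fintype.card F ^ ((pivots Y).filter fun j => i ≤ j).card := by
  have hfilter : (Finset.univ.filter fun v => v ∈ Y ∧ IsPivot v i) =
      Finset.univ.filter fun v => v ∈ vanishBelow Y i ∧ v ∉ vanishBelow Y (i + 1) := by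
    ext v
    simp only [Finset.mem_filter_univ, mem_vanishBelow_succ, mem_vanishBelow, IsPivot, Fin.lt_def]
    tauto
  have hle : vanishBelow Y (i + 1) ≤ vanishBelow Y i := fun v hv =>
    (mem_vanishBelow_succ.mp hv).1
  have hrank := finrank_vanishBelow_succ Y i
  rw [if_pos hi] at hrank
  have hrank' : Module.finrank F (vanishBelow Y i) =
      ((pivots Y).filter fun j => i ≤ j).card := finrank_vanishBelow Y i.2.le
  rw [hfilter, card_filter_mem_and_notMem hle, ← hrank', ← hrank, pow_succ,
    Nat.sub_mul, Nat.sub_mul, mul_comm (Fintype.card F) (_ * _), one_mul]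

end Pivots

section QNumbers

/-- The `q`-number `[m]_q = 1 + q + ⋯ + q^(m-1)`. -/
def qNumber (q m : ℕ) : ℕ :=
  ∑ s ∈ Finset.range m, q ^ s

/-- The `q`-factorial `[m]_q! = [1]_q ⋯ [m]_q`. -/
def qFactorial (q m : ℕ) : ℕ :=
  ∏ t ∈ Finset.range m, qNumber q (t + 1)

theorem qNumber_zero (q : ℕ) : qNumber q 0 = 0 :=
  Finset.sum_range_zero _

theorem qNumber_succ (q m : ℕ) : qNumber q (m + 1) = 1 + q * qNumber q m := by
  rw [qNumber, qNumber, Finset.sum_range_succ', Finset.mul_sum, pow_zero, add_comm]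
  simp only [pow_succ']

theorem pow_add_sub_pow (q k m : ℕ) :
    q ^ (k + m) - q ^ k = q ^ k * ((q - 1) * qNumber q m) := by
  obtain _ | p := q
  · cases k <;> cases m <;> simp
  · rw [pow_add, qNumber, ← geom_sum_mul_add p m, Nat.mul_add_one, Nat.add_sub_cancel,
      Nat.add_sub_cancel, mul_comm p]

theorem qNumber_succ' (q m : ℕ) : qNumber q (m + 1) = qNumber q m + q ^ m :=
  Finset.sum_range_succ _ _

theorem qFactorial_succ (q m : ℕ) :
    qFactorial q (m + 1) = qNumber q (m + 1) * qFactorial q m :=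
  (Finset.prod_range_succ _ _).trans (mul_comm _ _)

theorem triangle_succ (k : ℕ) : (k + 1) * (k + 1 - 1) / 2 = k * (k - 1) / 2 + k := by
  rw [← Finset.sum_range_id, ← Finset.sum_range_id, Finset.sum_range_succ]

theorem qDerangeNum_zero (q : ℕ) : qDerangeNum q 0 = 1 := by
  simp [qDerangeNum]

theorem qDerangeNum_succ (q m : ℕ) :
    qDerangeNum q (m + 1) = qNumber q (m + 1) * qDerangeNum q m +
      (-1) ^ (m + 1) * (q : ℤ) ^ ((m + 1) * (m + 1 - 1) / 2) := by
  rw [qDerangeNum, Finset.sum_range_succ, Finset.Icc_eq_empty (by simp), Finset.prod_empty,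
    mul_one, qDerangeNum, Finset.mul_sum]
  congr 1
  refine Finset.sum_congr rfl fun r hr => ?_
  have hrm : r + 1 ≤ m + 1 := Finset.mem_range.mp hr
  rw [Finset.prod_Icc_succ_top hrm, qNumber]
  push_cast
  ring

theorem qDerangeNum_succ_succ (q m : ℕ) :
    qDerangeNum q (m + 2) =
      qNumber q (m + 1) * (qDerangeNum q (m + 1) + q ^ (m + 1) * qDerangeNum q m) := by
  rw [qDerangeNum_succ q (m + 1), qNumber_succ' q (m + 1), triangle_succ (m + 1), pow_add]
  have h := qDerangeNum_succ q m
  simp only [Nat.add_sub_cancel] at h ⊢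
  push_cast
  linear_combination (q : ℤ) ^ (m + 1) * h

theorem qDerangeNum_nonneg (q : ℕ) : ∀ m, 0 ≤ qDerangeNum q m
  | 0 => by simp [qDerangeNum_zero]
  | 1 => by simp [qDerangeNum_succ, qDerangeNum_zero, qNumber]
  | m + 2 => by
    have h := qDerangeNum_nonneg q m
    have h' := qDerangeNum_nonneg q (m + 1)
    rw [qDerangeNum_succ_succ]
    positivity

end QNumbers

section CodimSum

variable {F : Type*} [Field F] {V : Type*} [AddCommGroup V] [Module F V] [Finite V]

/-- The sum of `z (codim Y)` over all subspaces `Y` of `V`. -/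
def codimSum (F V : Type*) [Field F] [AddCommGroup V] [Module F V] [Finite V] (z : ℕ → ℤ) : ℤ :=
  ∑ Y : Submodule F V, z (Module.finrank F (V ⧸ Y))

theorem codimSum_add (y z : ℕ → ℤ) :
    codimSum F V (fun k => y k + z k) = codimSum F V y + codimSum F V z :=
  Finset.sum_add_distrib

theorem codimSum_mul (a : ℤ) (z : ℕ → ℤ) :
    codimSum F V (fun k => a * z k) = a * codimSum F V z :=
  (Finset.mul_sum _ _ _).symm

theorem codimSum_eq_of_linearEquiv {W : Type*} [AddCommGroup W] [Module F W] [Finite W]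
    (e : V ≃ₗ[F] W) (z : ℕ → ℤ) : codimSum F V z = codimSum F W z :=
  Fintype.sum_equiv (Submodule.orderIsoMapComap e).toEquiv _ _ fun Y => by
    rw [(Submodule.Quotient.equiv Y (Y.map (e : V →ₗ[F] W)) e rfl).finrank_eq]
    rfl

theorem sum_filter_le_eq_codimSum (X : Submodule F V) (z : ℕ → ℤ) :
    ∑ Y with X ≤ Y, z (Module.finrank F (V ⧸ Y)) = codimSum F (V ⧸ X) z := by
  have hsub : ∀ Y : Submodule F V, Y ∈ Finset.univ.filter (X ≤ ·) ↔ Y ∈ Set.Ici X := by simp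
  rw [Finset.sum_subtype _ hsub fun Y => z (Module.finrank F (V ⧸ Y)), codimSum]
  refine (Fintype.sum_equiv (Submodule.comapMkQRelIso X).toEquiv _ _ fun Y => ?_).symm
  have hmap : (Y.comap X.mkQ).map X.mkQ = Y :=
    Submodule.map_comap_eq_of_surjective X.mkQ_surjective Y
  have h := (Submodule.quotientQuotientEquivQuotient X (Y.comap X.mkQ)
    (X.le_comap_mkQ Y)).finrank_eq
  rw [hmap] at h
  rw [h]
  rfl

theorem codimSum_zero [Finite F] (z : ℕ → ℤ) : codimSum F (Fin 0 → F) z = z 0 := by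
  rw [codimSum, Fintype.sum_subsingleton _ ⊥, Module.finrank_zero_of_subsingleton]

variable [Fintype F]

theorem codimSum_prod (z : ℕ → ℤ) :
    codimSum F (F × V) z =
      codimSum F V (fun k => (Fintype.card F : ℤ) ^ k * z k) +
        codimSum F V (fun k => z (k + 1)) := by
  have := Fintype.ofFinite V
  have hcard : ∀ Y : Submodule F V,
      Fintype.card (V ⧸ Y) = Fintype.card F ^ Module.finrank F (V ⧸ Y) := fun Y =>
    Module.card_eq_pow_finrank
  rw [codimSum, sum_submodule_prod, add_comm]
  simp only [finrank_quotient_bot_prod, finrank_quotient_slopeSubmodule, Finset.sum_const,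
    Finset.card_univ, hcard, nsmul_eq_mul, Nat.cast_pow]
  rfl

theorem codimSum_succ (n : ℕ) (z : ℕ → ℤ) :
    codimSum F (Fin (n + 1) → F) z =
      codimSum F (Fin n → F) (fun k => (Fintype.card F : ℤ) ^ k * z k) +
        codimSum F (Fin n → F) (fun k => z (k + 1)) := by
  rw [← codimSum_prod]
  exact (codimSum_eq_of_linearEquiv (Fin.consLinearEquiv F fun _ : Fin (n + 1) => F) z).symm

theorem codimSum_qNumber_mul_pred (n : ℕ) (z : ℕ → ℤ) :
    codimSum F (Fin (n + 1) → F) (fun k => qNumber (Fintype.card F) k * z (k - 1)) =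
      qNumber (Fintype.card F) (n + 1) * codimSum F (Fin n → F) z := by
  induction n generalizing z with
  | zero => simp [codimSum_succ, codimSum_zero, qNumber]
  | succ n ih =>
    set q := Fintype.card F
    have hzero : codimSum F (Fin (n + 1) → F) (fun k => (q : ℤ) ^ k * (qNumber q k * z (k - 1))) =
        q * codimSum F (Fin (n + 1) → F)
          (fun k => qNumber q k * ((q : ℤ) ^ (k - 1) * z (k - 1))) := by
      rw [← codimSum_mul]
      congr 1
      funext k
      cases k with
      | zero => simp [qNumber_zero]
      | succ k => rw [pow_succ, Nat.add_sub_cancel]; ring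
    have hsucc : codimSum F (Fin (n + 1) → F) (fun k => qNumber q (k + 1) * z (k + 1 - 1)) =
        codimSum F (Fin (n + 1) → F) z +
          q * codimSum F (Fin (n + 1) → F) (fun k => qNumber q k * z (k - 1 + 1)) := by
      rw [← codimSum_mul, ← codimSum_add]
      congr 1
      funext k
      cases k with
      | zero => simp [qNumber_zero, qNumber_succ]
      | succ k => rw [qNumber_succ q (k + 1), Nat.add_sub_cancel]; push_cast; ring
    rw [codimSum_succ, hzero, hsucc, ih fun k => (q : ℤ) ^ k * z k, ih fun k => z (k + 1),
      qNumber_succ q (n + 1), codimSum_succ]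
    push_cast
    ring

theorem codimSum_neg_one_pow (n : ℕ) :
    codimSum F (Fin (n + 1) → F)
      (fun k => (-1) ^ k * (Fintype.card F : ℤ) ^ (k * (k - 1) / 2)) = 0 := by
  rw [codimSum_succ, ← codimSum_add]
  refine Finset.sum_eq_zero fun Y _ => ?_
  simp only [triangle_succ]
  ring

theorem codimSum_qDerangeNum (n : ℕ) :
    codimSum F (Fin n → F) (qDerangeNum (Fintype.card F)) = qFactorial (Fintype.card F) n := by
  induction n with
  | zero => simp [codimSum_zero, qDerangeNum_zero, qFactorial]
  | succ n ih =>
    have hrec : qDerangeNum (Fintype.card F) = fun k =>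
        qNumber (Fintype.card F) k * qDerangeNum (Fintype.card F) (k - 1) +
          (-1) ^ k * (Fintype.card F : ℤ) ^ (k * (k - 1) / 2) := by
      funext k
      cases k with
      | zero => simp [qDerangeNum_zero, qNumber_zero]
      | succ k => exact qDerangeNum_succ _ k
    conv_lhs => rw [hrec]
    rw [codimSum_add, codimSum_neg_one_pow, add_zero, codimSum_qNumber_mul_pred, ih,
      qFactorial_succ, Nat.cast_mul]

theorem sum_filter_le_qDerangeNum_toNat (X : Submodule F V) :
    ∑ Y with X ≤ Y, (qDerangeNum (Fintype.card F) (Module.finrank F (V ⧸ Y))).toNat =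
      qFactorial (Fintype.card F) (Module.finrank F (V ⧸ X)) := by
  zify
  simp only [Int.toNat_of_nonneg (qDerangeNum_nonneg _ _)]
  rw [sum_filter_le_eq_codimSum X fun k => qDerangeNum (Fintype.card F) k,
    codimSum_eq_of_linearEquiv (Module.finBasis F (V ⧸ X)).equivFun]
  exact codimSum_qDerangeNum _

end CodimSum

section PivotProduct

variable {F : Type*} [Field F] {n : ℕ}

/-- The exponent of `q` in the multiplicity `m(S)`; it is the dimension of the Schubert cell of
the subspaces with pivot set `S`. -/
def cellDim (S : Finset (Fin n)) : ℕ :=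
  ∑ i ∈ S, (n - ((i : ℕ) + 1) - ((S.filter fun t => i ≤ t).card - 1))

theorem card_filter_map_succEmb (S : Finset (Fin n)) (i : Fin n) :
    ((S.map (Fin.succEmb n)).filter fun t => i.succ ≤ t).card =
      (S.filter fun t => i ≤ t).card := by
  simp [Finset.filter_map, Finset.card_map, Function.comp_def]

theorem cellDim_map_succEmb (S : Finset (Fin n)) :
    cellDim (S.map (Fin.succEmb n)) = cellDim S := by
  rw [cellDim, Finset.sum_map]
  refine Finset.sum_congr rfl fun i _ => ?_
  rw [Fin.coe_succEmb, card_filter_map_succEmb, Fin.val_succ, Nat.add_sub_add_right]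

theorem cellDim_insert_zero (S : Finset (Fin n)) :
    cellDim (insert 0 (S.map (Fin.succEmb n))) = (n - S.card) + cellDim S := by
  have h0 : (0 : Fin (n + 1)) ∉ S.map (Fin.succEmb n) := by simp
  rw [cellDim, Finset.sum_insert h0, Finset.sum_map]
  congr 1
  · rw [Finset.filter_true_of_mem fun t _ => Fin.zero_le t, Finset.card_insert_of_notMem h0,
      Finset.card_map]
    simp
  · refine Finset.sum_congr rfl fun i _ => ?_
    rw [Fin.coe_succEmb, Finset.filter_insert, if_neg (by simp), card_filter_map_succEmb,
      Fin.val_succ, Nat.add_sub_add_right]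

theorem prod_finset_fin_succ {M : Type*} [CommMonoid M] (g : Finset (Fin (n + 1)) → M) :
    ∏ S, g S = (∏ S : Finset (Fin n), g (S.map (Fin.succEmb n))) *
      ∏ S : Finset (Fin n), g (insert 0 (S.map (Fin.succEmb n))) := by
  have hpow : ((Finset.univ : Finset (Fin n)).map (Fin.succEmb n)).powerset =
      Finset.univ.map (Finset.mapEmbedding (Fin.succEmb n)).toEmbedding := by
    ext S
    simp [Finset.subset_map_iff, eq_comm]
  rw [← Finset.powerset_univ, Fin.univ_succ, Finset.cons_eq_insert]
  exact (Finset.prod_powerset_insert (by simp) g).trans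
    (congrArg₂ _ (hpow ▸ Finset.prod_map _ _ _) (hpow ▸ Finset.prod_map _ _ _))

theorem prod_submodule_fin_succ {M : Type*} [CommMonoid M] [Fintype F]
    (f : Submodule F (Fin (n + 1) → F) → M) :
    ∏ W, f W =
      (∏ Y : Submodule F (Fin n → F), f (consSubmodule F n ((⊥ : Submodule F F).prod Y))) *
        ∏ Y : Submodule F (Fin n → F), ∏ c : (Fin n → F) ⧸ Y,
          f (consSubmodule F n (slopeSubmodule Y c)) := by
  rw [← prod_submodule_prod fun W => f (consSubmodule F n W)]
  exact ((consSubmodule F n).toEquiv.prod_comp f).symm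

theorem prod_comp_pivots {M : Type*} [CommMonoid M] [Fintype F] (g : Finset (Fin n) → M) :
    ∏ Y : Submodule F (Fin n → F), g (pivots Y) =
      ∏ S : Finset (Fin n), g S ^ (Fintype.card F ^ cellDim S) := by
  induction n with
  | zero =>
    rw [Fintype.prod_subsingleton _ ⊥, Fintype.prod_subsingleton _ ∅,
      Finset.eq_empty_of_isEmpty (pivots ⊥)]
    simp [cellDim]
  | succ n ih =>
    have hcard : ∀ Y : Submodule F (Fin n → F),
        Fintype.card ((Fin n → F) ⧸ Y) = Fintype.card F ^ (n - (pivots Y).card) := fun Y => by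
      rw [Module.card_eq_pow_finrank (K := F), Submodule.finrank_quotient, Module.finrank_fin_fun,
        finrank_eq_card_pivots]
    rw [prod_submodule_fin_succ, prod_finset_fin_succ]
    simp only [pivots_consSubmodule_bot_prod, pivots_consSubmodule_slopeSubmodule,
      Finset.prod_const, Finset.card_univ, hcard, cellDim_map_succEmb, cellDim_insert_zero]
    rw [ih fun S => g (S.map (Fin.succEmb n)),
      ih fun S => g (insert 0 (S.map (Fin.succEmb n))) ^ Fintype.card F ^ (n - S.card)]
    simp only [← pow_mul, pow_add]

end PivotProduct

section PivotWeight

variable {F : Type*} [Field F] [Fintype F] {K : Type} [Field K] {n : ℕ}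

/-- The weight `x_i / (q^(n-i) (q-1))` of a vector with first nonzero entry in row `i`, normalised
so that the `q - 1` nonzero vectors of a line together weigh `x_i / q^(n-i)`. -/
def pivotWeight (x : Fin n → K) (v : Fin n → F) : K :=
  ∑ i with IsPivot v i, x i / (Fintype.card F : K) ^ (n - 1 - (i : ℕ)) / (Fintype.card F - 1)

theorem IsPivot.pivotWeight_eq {v : Fin n → F} {i : Fin n} (hi : IsPivot v i) (x : Fin n → K) :
    pivotWeight x v =
      x i / (Fintype.card F : K) ^ (n - 1 - (i : ℕ)) / (Fintype.card F - 1) := by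
  have hfilter : (Finset.univ.filter fun j => IsPivot v j) = {i} := by
    ext j
    simp only [Finset.mem_filter_univ, Finset.mem_singleton]
    exact ⟨fun hj => hj.eq hi, fun h => h ▸ hi⟩
  rw [pivotWeight, hfilter, Finset.sum_singleton]

theorem pivotWeight_nonneg [PartialOrder K] [IsStrictOrderedRing K] [PosMulReflectLT K]
    {x : Fin n → K} (hx : ∀ i, 0 ≤ x i) (v : Fin n → F) : 0 ≤ pivotWeight x v := by
  have hq : (0 : K) ≤ Fintype.card F - 1 :=
    sub_nonneg.mpr (Nat.one_le_cast.mpr Fintype.card_pos)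
  exact Finset.sum_nonneg fun i _ =>
    div_nonneg (div_nonneg (hx i) (pow_nonneg (Nat.cast_nonneg _) _)) hq

theorem weightBelow_pivotWeight [CharZero K] (x : Fin n → K) (Y : Submodule F (Fin n → F)) :
    weightBelow (fun v => Submodule.span F {v}) (pivotWeight x) Y =
      lambdaS K n (Fintype.card F : K) x (pivots Y) := by
  have hq : (Fintype.card F : K) ≠ 0 := Nat.cast_ne_zero.mpr Fintype.card_ne_zero
  have hq1 : (Fintype.card F : K) - 1 ≠ 0 :=
    sub_ne_zero.mpr (Nat.cast_ne_one.mpr Fintype.one_lt_card.ne')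
  have hswap : weightBelow (fun v => Submodule.span F {v}) (pivotWeight x) Y =
      ∑ i, ((Finset.univ.filter fun v => v ∈ Y ∧ IsPivot v i).card : K) *
        (x i / (Fintype.card F : K) ^ (n - 1 - (i : ℕ)) / (Fintype.card F - 1)) := by
    simp only [weightBelow, pivotWeight, Submodule.span_singleton_le_iff_mem, ← nsmul_eq_mul,
      ← Finset.sum_const]
    refine Finset.sum_comm' fun v i => ?_
    simp
  rw [hswap, lambdaS, ← Finset.sum_subset (Finset.subset_univ (pivots Y)) fun i _ hi => ?_]
  · refine Finset.sum_congr rfl fun i hi => ?_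
    have hcount := congrArg (Nat.cast (R := K)) (card_filter_isPivot_mul_card Y hi)
    push_cast [Nat.cast_sub Fintype.card_pos] at hcount
    have hexp : (n : ℤ) - ((i : ℕ) + 1) - (((pivots Y).filter fun j => i ≤ j).card : ℤ) + 1 =
        ((n - 1 - (i : ℕ) : ℕ) : ℤ) + 1 - (((pivots Y).filter fun j => i ≤ j).card : ℕ) := by
      have := i.2
      omega
    rw [hexp, zpow_sub₀ hq, zpow_add₀ hq, zpow_natCast, zpow_natCast, zpow_one,
      eq_div_of_mul_eq hq hcount]
    field_simp
  · rw [Finset.filter_false_of_mem fun v _ hv => hi (mem_pivots.mpr ⟨v, hv⟩), Finset.card_empty,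
      Nat.cast_zero, zero_mul]

end PivotWeight

section SpanSup

variable {F : Type*} [Field F] {V : Type*} [AddCommGroup V] [Module F V]
  {A : Submodule F V} {a b v : V}

theorem span_singleton_sup_eq_of_mem {u : V} (hv : v ∈ Submodule.span F {u} ⊔ A) (hvA : v ∉ A) :
    Submodule.span F {v} ⊔ A = Submodule.span F {u} ⊔ A := by
  have hu : u ∉ A := fun hu => hvA <| by
    rwa [sup_eq_right.mpr ((Submodule.span_singleton_le_iff_mem u A).mpr hu)] at hv
  have hle : Submodule.span F {v} ⊔ A ≤ Submodule.span F {u} ⊔ A :=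
    sup_le ((Submodule.span_singleton_le_iff_mem _ _).mpr hv) le_sup_right
  exact ((Submodule.covBy_span_singleton_sup hu).eq_or_eq le_sup_right hle).resolve_left
    (Submodule.covBy_span_singleton_sup hvA).ne'

theorem eq_of_mem_span_add_smul_sup {s t : F} (haA : a ∉ A)
    (hva : v ∉ Submodule.span F {a} ⊔ A)
    (hs : v ∈ Submodule.span F {b + s • a} ⊔ A) (ht : v ∈ Submodule.span F {b + t • a} ⊔ A) :
    s = t := by
  have hvA : v ∉ A := fun h => hva (Submodule.mem_sup_right h)
  by_contra hst
  have hmem : ∀ r : F, v ∈ Submodule.span F {b + r • a} ⊔ A →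
      b + r • a ∈ Submodule.span F {v} ⊔ A := fun r hr => by
    rw [span_singleton_sup_eq_of_mem hr hvA]
    exact Submodule.mem_sup_left (Submodule.mem_span_singleton_self _)
  have ha : a ∈ Submodule.span F {v} ⊔ A := by
    rw [← Submodule.smul_mem_iff _ (sub_ne_zero.mpr hst), sub_smul,
      ← add_sub_add_left_eq_sub _ _ b]
    exact sub_mem (hmem s hs) (hmem t ht)
  rw [span_singleton_sup_eq_of_mem ha haA] at hva
  exact hva (Submodule.mem_sup_left (Submodule.mem_span_singleton_self v))

theorem existsUnique_mem_span_add_smul_sup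
    (hv : v ∈ Submodule.span F {b} ⊔ (Submodule.span F {a} ⊔ A))
    (hva : v ∉ Submodule.span F {a} ⊔ A) (ha : a ∉ A) :
    ∃! s : F, v ∈ Submodule.span F {b + s • a} ⊔ A := by
  simp only [Submodule.mem_sup, Submodule.mem_span_singleton, exists_exists_eq_and] at hv
  obtain ⟨c, _, ⟨d, z, hz, rfl⟩, rfl⟩ := hv
  have hc : c ≠ 0 := by
    rintro rfl
    rw [zero_smul, zero_add] at hva
    exact hva (Submodule.mem_sup.mpr
      ⟨d • a, Submodule.mem_span_singleton.mpr ⟨d, rfl⟩, z, hz, rfl⟩)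
  have hmem : c • b + (d • a + z) ∈ Submodule.span F {b + (d / c) • a} ⊔ A := by
    refine Submodule.mem_sup.mpr
      ⟨c • (b + (d / c) • a), Submodule.mem_span_singleton.mpr ⟨c, rfl⟩, z, hz, ?_⟩
    rw [smul_add, smul_smul, mul_div_cancel₀ d hc, add_assoc]
  exact ⟨d / c, hmem, fun s hs => eq_of_mem_span_add_smul_sup ha hva hs hmem⟩

theorem mem_and_notMem_of_mem_span_add_smul_sup {s : F} (hb : b ∉ Submodule.span F {a} ⊔ A)
    (hv : v ∈ Submodule.span F {b + s • a} ⊔ A) (hvA : v ∉ A) :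
    v ∈ Submodule.span F {b} ⊔ (Submodule.span F {a} ⊔ A) ∧ v ∉ Submodule.span F {a} ⊔ A := by
  have hsa : s • a ∈ Submodule.span F {a} ⊔ A :=
    Submodule.mem_sup_left (Submodule.mem_span_singleton.mpr ⟨s, rfl⟩)
  have hba : Submodule.span F {b + s • a} ⊔ A ≤
      Submodule.span F {b} ⊔ (Submodule.span F {a} ⊔ A) := by
    refine sup_le ((Submodule.span_singleton_le_iff_mem _ _).mpr ?_)
      (le_sup_right.trans le_sup_right)
    exact add_mem (Submodule.mem_sup_left (Submodule.mem_span_singleton_self b))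
      (Submodule.mem_sup_right hsa)
  refine ⟨hba hv, fun hva => ?_⟩
  have hmem : b + s • a ∈ Submodule.span F {v} ⊔ A := by
    rw [span_singleton_sup_eq_of_mem hv hvA]
    exact Submodule.mem_sup_left (Submodule.mem_span_singleton_self _)
  have hle : Submodule.span F {v} ⊔ A ≤ Submodule.span F {a} ⊔ A :=
    sup_le ((Submodule.span_singleton_le_iff_mem _ _).mpr hva) le_sup_right
  exact hb ((add_mem_cancel_right hsa).mp (hle hmem))

end SpanSup

section ColSpan

variable {F : Type*} [Field F] {n : ℕ}

/-- The span of the first `i` columns of a matrix (of all columns if `n ≤ i`). -/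
def colSpan (M : Matrix (Fin n) (Fin n) F) (i : ℕ) : Submodule F (Fin n → F) :=
  Submodule.span F (M.col '' {j | (j : ℕ) < i})

theorem colSpan_mono (M : Matrix (Fin n) (Fin n) F) : Monotone (colSpan M) := fun _ _ hij =>
  Submodule.span_mono (Set.image_mono fun _ hk => lt_of_lt_of_le hk hij)

theorem colSpan_succ (M : Matrix (Fin n) (Fin n) F) (j : Fin n) :
    colSpan M (j + 1) = Submodule.span F {M.col j} ⊔ colSpan M j := by
  have hset : {k : Fin n | (k : ℕ) < j + 1} = insert j {k : Fin n | (k : ℕ) < j} := by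
    ext k
    simp only [Set.mem_ofPred_eq, Set.mem_insert_iff, Fin.ext_iff]
    omega
  rw [colSpan, hset, Set.image_insert_eq, Submodule.span_insert, colSpan]

theorem finrank_colSpan {M : Matrix (Fin n) (Fin n) F} (hM : IsUnit M) (i : ℕ) :
    Module.finrank F (colSpan M i) = min i n := by
  have hli : LinearIndependent F fun j : {j : Fin n // (j : ℕ) < i} => M.col j :=
    (Matrix.linearIndependent_cols_of_isUnit hM).comp _ Subtype.val_injective
  have hrange : M.col '' {j | (j : ℕ) < i} =
      Set.range fun j : {j : Fin n // (j : ℕ) < i} => M.col j :=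
    Set.image_eq_range _ _
  rw [colSpan, hrange, finrank_span_eq_card hli, Fintype.card_subtype, Fin.card_filter_val_lt,
    min_comm]

theorem colSpan_mul_le (M : Matrix (Fin n) (Fin n) F) {P : Matrix (Fin n) (Fin n) F} {i : ℕ}
    (hP : ∀ l j : Fin n, (j : ℕ) < i → i ≤ l → P l j = 0) : colSpan (M * P) i ≤ colSpan M i := by
  refine Submodule.span_le.mpr ?_
  rintro _ ⟨j, hj, rfl⟩
  have hcol : (M * P).col j = ∑ l, P l j • M.col l := by
    ext r
    simp [Matrix.mul_apply, mul_comm]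
  rw [hcol]
  refine Submodule.sum_mem _ fun l _ => ?_
  obtain hl | hl := lt_or_ge (l : ℕ) i
  · exact Submodule.smul_mem _ _ (Submodule.subset_span ⟨l, hl, rfl⟩)
  · rw [hP l j hj hl, zero_smul]
    exact Submodule.zero_mem _

theorem colSpan_mul {M P : Matrix (Fin n) (Fin n) F} (hM : IsUnit M) (hP : IsUnit P) {i : ℕ}
    (hP0 : ∀ l j : Fin n, (j : ℕ) < i → i ≤ l → P l j = 0) : colSpan (M * P) i = colSpan M i :=
  Submodule.eq_of_le_of_finrank_eq (colSpan_mul_le M hP0)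
    ((finrank_colSpan (hM.mul hP) i).trans (finrank_colSpan hM i).symm)

theorem upperTri_inv_mul_of_colSpan_eq {F : Type} [Field F] {g h : GL (Fin n) F}
    (hgh : ∀ i, colSpan (g : Matrix (Fin n) (Fin n) F) i =
      colSpan (h : Matrix (Fin n) (Fin n) F) i) :
    upperTri ((g⁻¹ * h : GL (Fin n) F) : Matrix (Fin n) (Fin n) F) := by
  intro i j hji
  let φ : (Fin n → F) →ₗ[F] F := LinearMap.proj i ∘ₗ
    Matrix.mulVecLin ((g⁻¹ : GL (Fin n) F) : Matrix (Fin n) (Fin n) F)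
  have hφ : colSpan (g : Matrix (Fin n) (Fin n) F) (j + 1) ≤ φ.ker := by
    refine Submodule.span_le.mpr ?_
    rintro _ ⟨l, hl, rfl⟩
    have hli : i ≠ l := fun h => by
      have : (j : ℕ) < i := hji
      have : (l : ℕ) < j + 1 := hl
      omega
    calc φ ((g : Matrix (Fin n) (Fin n) F).col l)
        = ((g⁻¹ * g : GL (Fin n) F) : Matrix (Fin n) (Fin n) F) i l := rfl
      _ = 0 := by rw [inv_mul_cancel, Units.val_one, Matrix.one_apply_ne hli]
  exact hφ (hgh (j + 1) ▸ Submodule.subset_span ⟨j, Nat.lt_succ_self _, rfl⟩)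

end ColSpan

section Flag

variable {F : Type} [Field F] {n : ℕ}

/-- The `i`-dimensional member of the complete flag attached to a coset `gB`, i.e. the span of the
first `i` columns of `g`; for `n ≤ i` it is the whole space. -/
def flagSpace (C : Cosets F n) (i : ℕ) : Submodule F (Fin n → F) :=
  colSpan (C.out : Matrix (Fin n) (Fin n) F) i

/-- The complete flag attached to a coset, as a set of subspaces. -/
def flag (C : Cosets F n) : Set (Submodule F (Fin n → F)) :=
  Set.range (flagSpace C)

theorem flagSpace_mk (g : GLn F n) (i : ℕ) :
    flagSpace (QuotientGroup.mk g : Cosets F n) i = colSpan (g : Matrix (Fin n) (Fin n) F) i := by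
  obtain ⟨b, hb⟩ := QuotientGroup.mk_out_eq_mul (Bsub F n) g
  rw [flagSpace, hb, Units.val_mul]
  exact colSpan_mul g.isUnit b.1.isUnit fun l j hj hl =>
    b.2 l j (Fin.lt_def.mpr (hj.trans_le hl))

theorem flagSpace_mono (C : Cosets F n) : Monotone (flagSpace C) :=
  colSpan_mono _

theorem finrank_flagSpace (C : Cosets F n) (i : ℕ) :
    Module.finrank F (flagSpace C i) = min i n :=
  finrank_colSpan C.out.isUnit i

theorem flagSpace_succ (C : Cosets F n) {k : ℕ} (hk : k < n) :
    flagSpace C (k + 1) =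
      Submodule.span F {(C.out : Matrix (Fin n) (Fin n) F).col ⟨k, hk⟩} ⊔ flagSpace C k :=
  colSpan_succ _ ⟨k, hk⟩

theorem col_out_notMem_flagSpace (C : Cosets F n) {k : ℕ} (hk : k < n) :
    (C.out : Matrix (Fin n) (Fin n) F).col ⟨k, hk⟩ ∉ flagSpace C k := fun hmem => by
  have heq : flagSpace C (k + 1) = flagSpace C k := (flagSpace_succ C hk).trans
    (sup_eq_right.mpr ((Submodule.span_singleton_le_iff_mem _ _).mpr hmem))
  have hrank := finrank_flagSpace C (k + 1)
  rw [heq, finrank_flagSpace] at hrank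
  omega

theorem flagSpace_zero (C : Cosets F n) : flagSpace C 0 = ⊥ :=
  Submodule.finrank_eq_zero.mp (by rw [finrank_flagSpace, Nat.zero_min])

theorem flagSpace_eq_top (C : Cosets F n) {i : ℕ} (hi : n ≤ i) : flagSpace C i = ⊤ :=
  Submodule.eq_top_of_finrank_eq (by
    rw [finrank_flagSpace, min_eq_right hi, Module.finrank_fin_fun])

theorem flagSpace_injective : Function.Injective (flagSpace (F := F) (n := n)) := by
  intro C D h
  rw [← QuotientGroup.out_eq' C, ← QuotientGroup.out_eq' D, QuotientGroup.eq]
  exact upperTri_inv_mul_of_colSpan_eq (congrFun h)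

theorem bot_mem_flag (C : Cosets F n) : ⊥ ∈ flag C :=
  ⟨0, flagSpace_zero C⟩

theorem flagSpace_finrank {C : Cosets F n} {W : Submodule F (Fin n → F)} (hW : W ∈ flag C) :
    flagSpace C (Module.finrank F W) = W := by
  obtain ⟨i, rfl⟩ := hW
  rw [finrank_flagSpace]
  obtain hi | hi := le_total i n
  · rw [min_eq_left hi]
  · rw [min_eq_right hi, flagSpace_eq_top C hi, flagSpace_eq_top C le_rfl]

theorem flag_injective : Function.Injective (flag (F := F) (n := n)) := by
  intro C D h
  refine flagSpace_injective (funext fun i => ?_)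
  obtain hi | hi := le_total i n
  · have hmem : flagSpace C i ∈ flag D := h ▸ Set.mem_range_self i
    rw [← flagSpace_finrank hmem, finrank_flagSpace, min_eq_left hi]
  · rw [flagSpace_eq_top C hi, flagSpace_eq_top D hi]

theorem exists_notMem_flagSpace_and_mem_succ {v : Fin n → F} (hv : v ≠ 0) (C : Cosets F n) :
    ∃ k, v ∉ flagSpace C k ∧ v ∈ flagSpace C (k + 1) :=
  Nat.exists_not_and_succ_of_not_zero_of_exists (p := fun k => v ∈ flagSpace C k)
    (by rwa [flagSpace_zero, Submodule.mem_bot])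
    ⟨n, by rw [flagSpace_eq_top C le_rfl]; exact Submodule.mem_top⟩

theorem span_sup_flagSpace {C : Cosets F n} {k : ℕ} {v : Fin n → F}
    (hv : v ∈ flagSpace C (k + 1)) (hvk : v ∉ flagSpace C k) :
    Submodule.span F {v} ⊔ flagSpace C k = flagSpace C (k + 1) := by
  have hk : k < n := lt_of_not_ge fun hk => hvk (flagSpace_eq_top C hk ▸ Submodule.mem_top)
  refine Submodule.eq_of_le_of_finrank_eq
    (sup_le ((Submodule.span_singleton_le_iff_mem _ _).mpr hv) (flagSpace_mono C k.le_succ)) ?_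
  rw [sup_comm, Submodule.finrank_sup_span_singleton hvk, finrank_flagSpace, finrank_flagSpace,
    min_eq_left hk.le, min_eq_left hk]

end Flag

section Hop

variable {F : Type} [Field F] [Fintype F] [DecidableEq F] {n : ℕ}

/-- The matrices occurring in the Hecke generator `T_{k+1}`: the transposition matrix for `t = 0`
and the transvection `f_{k+1}(t)` for `t ≠ 0`. -/
def hopGL (k : ℕ) (h : k + 1 < n) (t : F) : GLn F n :=
  if t = 0 then permGL F n (Equiv.swap ⟨k, Nat.lt_of_succ_lt h⟩ ⟨k + 1, h⟩)
  else transvGL F n ⟨k + 1, h⟩ ⟨k, Nat.lt_of_succ_lt h⟩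
    (fun hc => by simp [Fin.ext_iff] at hc) t

/-- One of the `q` cosets reached from `C` by the Hecke generator `T_{k+1}`. Their flags are those
which differ from the flag of `C` in dimension `k + 1` only. -/
def hop (k : ℕ) (h : k + 1 < n) (t : F) (C : Cosets F n) : Cosets F n :=
  QuotientGroup.mk (C.out * hopGL k h t)

theorem genGB_eq_sum_hop (K : Type) [Field K] {k : ℕ}
    (h : k + 1 < n) : genGB F n K k = ∑ t, mapMatrix K (hop k h t) := by
  ext C D
  rw [genGB, dif_pos h, Matrix.sum_apply, ← Finset.add_sum_erase _ _ (Finset.mem_univ (0 : F)),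
    Finset.card_filter, Nat.cast_sum, ← Finset.add_sum_erase _ _ (Finset.mem_univ (0 : F))]
  congr 1
  · simp [mapMatrix_apply, hop, hopGL]
  · simp only [ne_eq, not_true_eq_false, false_and, if_false, Nat.cast_zero, zero_add]
    refine Finset.sum_congr rfl fun t ht => ?_
    simp [mapMatrix_apply, hop, hopGL, Finset.ne_of_mem_erase ht]

theorem hopGL_apply_eq_zero {k : ℕ} (h : k + 1 < n) (t : F) {i : ℕ} (hi : i ≠ k + 1)
    (l j : Fin n) (hj : (j : ℕ) < i) (hl : i ≤ l) :
    (hopGL k h t : Matrix (Fin n) (Fin n) F) l j = 0 := by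
  have hlj : l ≠ j := fun heq => by omega
  unfold hopGL
  split_ifs
  · refine if_neg fun hswap => ?_
    simp only [Equiv.swap_apply_def, Fin.ext_iff, apply_ite Fin.val] at hswap hlj
    split_ifs at hswap <;> omega
  · have hentry : ¬ ((⟨k + 1, h⟩ : Fin n) = l ∧ (⟨k, Nat.lt_of_succ_lt h⟩ : Fin n) = j) := by
      simp only [Fin.ext_iff]
      omega
    simp only [transvGL, Matrix.transvection, Matrix.add_apply, Matrix.one_apply_ne hlj,
      Matrix.single_apply, if_neg hentry, add_zero]

theorem span_col_mul_hopGL {k : ℕ} (h : k + 1 < n) (t : F) (g : GLn F n) :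
    Submodule.span F {((g * hopGL k h t : GLn F n) : Matrix (Fin n) (Fin n) F).col
        ⟨k, Nat.lt_of_succ_lt h⟩} =
      Submodule.span F {(g : Matrix (Fin n) (Fin n) F).col ⟨k + 1, h⟩ +
        t⁻¹ • (g : Matrix (Fin n) (Fin n) F).col ⟨k, Nat.lt_of_succ_lt h⟩} := by
  by_cases ht : t = 0
  · congr 2
    ext i
    simp [hopGL, ht, permGL, permMat, Matrix.mul_apply]
  · rw [← Submodule.span_singleton_smul_eq (IsUnit.mk0 t ht)
      ((g : Matrix (Fin n) (Fin n) F).col ⟨k + 1, h⟩ + _), smul_add, smul_inv_smul₀ ht]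
    congr 2
    ext i
    simp [hopGL, ht, transvGL, add_comm]

theorem flagSpace_hop_of_ne {k : ℕ} (h : k + 1 < n) (t : F) (C : Cosets F n) {i : ℕ}
    (hi : i ≠ k + 1) : flagSpace (hop k h t C) i = flagSpace C i := by
  rw [hop, flagSpace_mk, Units.val_mul]
  exact colSpan_mul C.out.isUnit (hopGL k h t).isUnit (hopGL_apply_eq_zero h t hi)

theorem flagSpace_hop {k : ℕ} (h : k + 1 < n) (t : F) (C : Cosets F n) :
    flagSpace (hop k h t C) (k + 1) =
      Submodule.span F {(C.out : Matrix (Fin n) (Fin n) F).col ⟨k + 1, h⟩ +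
        t⁻¹ • (C.out : Matrix (Fin n) (Fin n) F).col ⟨k, Nat.lt_of_succ_lt h⟩} ⊔
      flagSpace C k := by
  have hk := flagSpace_hop_of_ne h t C (Nat.succ_ne_self k).symm
  rw [hop, flagSpace_mk] at hk
  rw [hop, flagSpace_mk, ← hk, ← span_col_mul_hopGL, ← colSpan_succ]

theorem existsUnique_mem_flagSpace_hop {k : ℕ} (h : k + 1 < n) {C : Cosets F n} {v : Fin n → F}
    (hv : v ∈ flagSpace C (k + 2)) (hvk : v ∉ flagSpace C (k + 1)) :
    ∃! t : F, v ∈ flagSpace (hop k h t C) (k + 1) := by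
  have hk : k < n := Nat.lt_of_succ_lt h
  rw [flagSpace_succ C h, flagSpace_succ C hk] at hv
  rw [flagSpace_succ C hk] at hvk
  simp only [flagSpace_hop]
  exact (inv_involutive.bijective.existsUnique_iff (p := fun s => v ∈
    Submodule.span F {(C.out : Matrix (Fin n) (Fin n) F).col ⟨k + 1, h⟩ +
      s • (C.out : Matrix (Fin n) (Fin n) F).col ⟨k, hk⟩} ⊔ flagSpace C k)).mp
    (existsUnique_mem_span_add_smul_sup hv hvk (col_out_notMem_flagSpace C hk))

theorem mem_and_notMem_of_mem_flagSpace_hop {k : ℕ} (h : k + 1 < n) {t : F} {C : Cosets F n}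
    {v : Fin n → F} (hv : v ∈ flagSpace (hop k h t C) (k + 1)) (hvk : v ∉ flagSpace C k) :
    v ∈ flagSpace C (k + 2) ∧ v ∉ flagSpace C (k + 1) := by
  have hk : k < n := Nat.lt_of_succ_lt h
  have hb := col_out_notMem_flagSpace C h
  rw [flagSpace_hop] at hv
  rw [flagSpace_succ C hk] at hb
  rw [flagSpace_succ C h, flagSpace_succ C hk]
  exact mem_and_notMem_of_mem_span_add_smul_sup hb hv hvk

end Hop

theorem range_eq_image_compl_singleton {α β : Type*} {f : α → β} {i j : α} (hij : i ≠ j)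
    (h : f i = f j) : Set.range f = f '' {i}ᶜ := by
  refine (Set.range_subset_iff.mpr fun m => ?_).antisymm (Set.image_subset_range f _)
  obtain rfl | hm := eq_or_ne m i
  · exact ⟨j, hij.symm, h.symm⟩
  · exact ⟨m, hm, rfl⟩

section MoveToFront

section Field

variable {F : Type} [Field F] {n : ℕ} {v : Fin n → F} {C : Cosets F n}

theorem image_span_sup_flag (v : Fin n → F) (C : Cosets F n) :
    (Submodule.span F {v} ⊔ ·) '' flag C =
      Set.range fun i => Submodule.span F {v} ⊔ flagSpace C i :=
  (Set.range_comp _ _).symm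

theorem insert_bot_image_span_sup_flag (hv0 : v ≠ 0) (hv : v ∈ flagSpace C 1) :
    insert ⊥ ((Submodule.span F {v} ⊔ ·) '' flag C) = flag C := by
  have hsucc : ∀ i, Submodule.span F {v} ⊔ flagSpace C (i + 1) = flagSpace C (i + 1) := fun i =>
    sup_eq_right.mpr ((Submodule.span_singleton_le_iff_mem _ _).mpr
      (flagSpace_mono C (Nat.le_add_left 1 i) hv))
  have hzero : Submodule.span F {v} ⊔ flagSpace C 0 = flagSpace C 1 :=
    span_sup_flagSpace hv (by rwa [flagSpace_zero, Submodule.mem_bot])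
  rw [image_span_sup_flag]
  refine Set.Subset.antisymm (Set.insert_subset (bot_mem_flag C) (Set.range_subset_iff.mpr ?_))
    (Set.range_subset_iff.mpr ?_)
  · rintro (_ | i)
    · exact ⟨1, hzero.symm⟩
    · exact ⟨i + 1, (hsucc i).symm⟩
  · rintro (_ | i)
    · exact Or.inl (flagSpace_zero C)
    · exact Or.inr ⟨i + 1, hsucc i⟩

end Field

variable {F : Type} [Field F] [Fintype F] [DecidableEq F] {n : ℕ}

theorem image_span_sup_flag_hop {k : ℕ} (h : k + 1 < n) {t : F} {C : Cosets F n} {v : Fin n → F}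
    (hvk : v ∉ flagSpace C k) (hv : v ∈ flagSpace (hop k h t C) (k + 1)) :
    (Submodule.span F {v} ⊔ ·) '' flag (hop k h t C) = (Submodule.span F {v} ⊔ ·) '' flag C := by
  obtain ⟨hvC, hvCk⟩ := mem_and_notMem_of_mem_flagSpace_hop h hv hvk
  rw [← flagSpace_hop_of_ne h t C (Nat.succ_ne_self k).symm] at hvk
  have hhop : Submodule.span F {v} ⊔ flagSpace (hop k h t C) (k + 1) =
      Submodule.span F {v} ⊔ flagSpace (hop k h t C) k := by
    rw [span_sup_flagSpace hv hvk, sup_eq_right, Submodule.span_singleton_le_iff_mem]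
    exact hv
  have hC : Submodule.span F {v} ⊔ flagSpace C (k + 1) =
      Submodule.span F {v} ⊔ flagSpace C (k + 2) := by
    rw [span_sup_flagSpace hvC hvCk, eq_comm, sup_eq_right, Submodule.span_singleton_le_iff_mem]
    exact hvC
  rw [image_span_sup_flag, image_span_sup_flag,
    range_eq_image_compl_singleton (Nat.succ_ne_self k) hhop,
    range_eq_image_compl_singleton (Nat.succ_ne_self (k + 1)).symm hC]
  exact Set.image_congr fun i hi => by rw [flagSpace_hop_of_ne h t C hi]

theorem exists_flag_eq (v : Fin n → F) (C : Cosets F n) :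
    ∃ D : Cosets F n, flag D = insert ⊥ ((Submodule.span F {v} ⊔ ·) '' flag C) := by
  obtain rfl | hv0 := eq_or_ne v 0
  · refine ⟨C, ?_⟩
    simp only [Submodule.span_zero_singleton, bot_sup_eq, Set.image_id',
      Set.insert_eq_of_mem (bot_mem_flag C)]
  obtain ⟨k, hvk, hv⟩ := exists_notMem_flagSpace_and_mem_succ hv0 C
  induction k generalizing C with
  | zero => exact ⟨C, (insert_bot_image_span_sup_flag hv0 hv).symm⟩
  | succ k ih =>
    have h : k + 1 < n := lt_of_not_ge fun h => hvk (flagSpace_eq_top C h ▸ Submodule.mem_top)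
    obtain ⟨t, ht, -⟩ := existsUnique_mem_flagSpace_hop h hv hvk
    have hvk' : v ∉ flagSpace C k := fun hk => hvk (flagSpace_mono C k.le_succ hk)
    rw [← image_span_sup_flag_hop h hvk' ht]
    rw [← flagSpace_hop_of_ne h t C (Nat.succ_ne_self k).symm] at hvk'
    exact ih (hop k h t C) hvk' ht

/-- The action of a vector `v` on cosets. The flag of `moveToFront v C` is obtained by joining the
line of `v` to every member of the flag of `C`; if `v = 0`, the coset does not change. -/
def moveToFront (v : Fin n → F) (C : Cosets F n) : Cosets F n :=
  (exists_flag_eq v C).choose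

theorem flag_moveToFront (v : Fin n → F) (C : Cosets F n) :
    flag (moveToFront v C) = insert ⊥ ((Submodule.span F {v} ⊔ ·) '' flag C) :=
  (exists_flag_eq v C).choose_spec

theorem moveToFront_hop {k : ℕ} (h : k + 1 < n) {t : F} {C : Cosets F n} {v : Fin n → F}
    (hvk : v ∉ flagSpace C k) (hv : v ∈ flagSpace (hop k h t C) (k + 1)) :
    moveToFront v (hop k h t C) = moveToFront v C :=
  flag_injective (by rw [flag_moveToFront, flag_moveToFront, image_span_sup_flag_hop h hvk hv])

theorem moveToFront_of_mem_flagSpace_one {v : Fin n → F} {C : Cosets F n} (hv0 : v ≠ 0)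
    (hv : v ∈ flagSpace C 1) : moveToFront v C = C :=
  flag_injective (by rw [flag_moveToFront, insert_bot_image_span_sup_flag hv0 hv])

theorem image_sup_flag_moveToFront (X : Submodule F (Fin n → F)) (v : Fin n → F)
    (C : Cosets F n) :
    (X ⊔ ·) '' flag (moveToFront v C) =
      insert X ((Submodule.span F {v} ⊔ X ⊔ ·) '' flag C) := by
  rw [flag_moveToFront, Set.image_insert_eq, sup_bot_eq, Set.image_image]
  simp only [sup_left_comm X, sup_assoc]

/-- The support of a word of vectors: the subspace they span. -/
abbrev lineWordSupp (l : List (Fin n → F)) : Submodule F (Fin n → F) :=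
  wordSupp (fun v => Submodule.span F {v}) l

theorem wordAct_moveToFront_congr {l : List (Fin n → F)} {C D : Cosets F n}
    (h : (lineWordSupp l ⊔ ·) '' flag C = (lineWordSupp l ⊔ ·) '' flag D) :
    wordAct moveToFront l C = wordAct moveToFront l D := by
  induction l generalizing C D with
  | nil => exact flag_injective (by simpa [wordSupp, wordAct] using h)
  | cons v l ih =>
    refine ih ?_
    rw [image_sup_flag_moveToFront, image_sup_flag_moveToFront]
    exact congrArg (insert _) h

theorem wordAct_moveToFront_absorb {l : List (Fin n → F)} {v : Fin n → F}
    (hv : Submodule.span F {v} ≤ lineWordSupp l) (C : Cosets F n) :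
    wordAct moveToFront l (moveToFront v C) = wordAct moveToFront l C := by
  apply wordAct_moveToFront_congr
  rw [image_sup_flag_moveToFront, sup_eq_right.mpr hv]
  exact Set.insert_eq_of_mem ⟨⊥, bot_mem_flag C, sup_bot_eq _⟩

theorem image_sup_flag_subset_flag_wordAct (l : List (Fin n → F)) (C : Cosets F n) :
    (lineWordSupp l ⊔ ·) '' flag C ⊆ flag (wordAct moveToFront l C) := by
  induction l generalizing C with
  | nil => simp [wordSupp, wordAct]
  | cons v l ih =>
    refine Set.Subset.trans ?_ (ih (moveToFront v C))
    rw [image_sup_flag_moveToFront]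
    exact Set.subset_insert _ _

end MoveToFront

section FixedPoints

theorem insert_image_sup_flag {F : Type} [Field F] {n : ℕ} (C : Cosets F n) (k : ℕ) :
    insert (flagSpace C k) ((flagSpace C (k + 1) ⊔ ·) '' flag C) =
      (flagSpace C k ⊔ ·) '' flag C := by
  have hsup : ∀ i j, flagSpace C i ⊔ flagSpace C j = flagSpace C (max i j) := fun i j =>
    ((flagSpace_mono C).map_sup i j).symm
  simp only [flag, ← Set.range_comp, Function.comp_def, hsup]
  refine Set.Subset.antisymm (Set.insert_subset ⟨k, congrArg _ (max_self k)⟩ ?_) ?_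
  · rintro _ ⟨i, rfl⟩
    exact ⟨max (k + 1) i, congrArg _ (by omega)⟩
  · rintro _ ⟨i, rfl⟩
    obtain hi | hi := le_or_gt i k
    · exact Or.inl (congrArg _ (max_eq_left hi))
    · exact Or.inr ⟨i, congrArg _ (by omega)⟩

variable {F : Type} [Field F] [Fintype F] [DecidableEq F] {n : ℕ}

theorem lineWordSupp_mem_flag_wordAct (l : List (Fin n → F)) (C : Cosets F n) :
    lineWordSupp l ∈ flag (wordAct moveToFront l C) :=
  image_sup_flag_subset_flag_wordAct l C ⟨⊥, bot_mem_flag C, sup_bot_eq _⟩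

theorem wordAct_moveToFront_cons {l : List (Fin n → F)} {v : Fin n → F} {C : Cosets F n}
    (hX : lineWordSupp l ∈ flag C) (hvX : v ∉ lineWordSupp l)
    (hv : v ∈ flagSpace C (Module.finrank F (lineWordSupp l) + 1)) :
    wordAct moveToFront (v :: l) C = wordAct moveToFront l C := by
  refine wordAct_moveToFront_congr (C := moveToFront v C) ?_
  rw [image_sup_flag_moveToFront]
  generalize lineWordSupp l = X at *
  rw [← flagSpace_finrank hX] at hvX
  nth_rw 1 2 3 [← flagSpace_finrank hX]
  rw [span_sup_flagSpace hv hvX, insert_image_sup_flag]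

theorem isFixedPt_wordAct_moveToFront_cons {l : List (Fin n → F)} {v : Fin n → F}
    (hvX : v ∉ lineWordSupp l) (C : Cosets F n) :
    Function.IsFixedPt (wordAct moveToFront (v :: l)) C ↔
      Function.IsFixedPt (wordAct moveToFront l) C ∧
        v ∈ flagSpace C (Module.finrank F (lineWordSupp l) + 1) := by
  have hX : ∀ D, wordAct moveToFront l D = C → lineWordSupp l ∈ flag C := fun D hD =>
    hD ▸ lineWordSupp_mem_flag_wordAct l D
  constructor
  · intro hC
    have hvX' : Submodule.span F {v} ⊔ lineWordSupp l ∈ flag C :=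
      Eq.subst (motive := fun D => Submodule.span F {v} ⊔ lineWordSupp l ∈ flag D) hC.eq
        (lineWordSupp_mem_flag_wordAct (v :: l) C)
    have hv : v ∈ flagSpace C (Module.finrank F (lineWordSupp l) + 1) := by
      rw [← Submodule.finrank_sup_span_singleton hvX, sup_comm, flagSpace_finrank hvX']
      exact Submodule.mem_sup_left (Submodule.mem_span_singleton_self v)
    exact ⟨(wordAct_moveToFront_cons (hX _ hC.eq) hvX hv).symm.trans hC, hv⟩
  · rintro ⟨hC, hv⟩
    exact (wordAct_moveToFront_cons (hX C hC.eq) hvX hv).trans hC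

theorem sum_card_fixedPoints_wordAct_cons {l : List (Fin n → F)}
    (hl : Module.finrank F (lineWordSupp l) < n) :
    ∑ v with v ∉ lineWordSupp l,
        Fintype.card (Function.fixedPoints (wordAct (moveToFront (F := F)) (v :: l))) =
      Fintype.card (Function.fixedPoints (wordAct (moveToFront (F := F)) l)) *
        (Fintype.card F ^ (Module.finrank F (lineWordSupp l) + 1) -
          Fintype.card F ^ Module.finrank F (lineWordSupp l)) := by
  let r : (Fin n → F) → Cosets F n → Prop := fun v =>
    Function.IsFixedPt (wordAct moveToFront (v :: l))
  have hcard : ∀ f : Cosets F n → Cosets F n, Fintype.card (Function.fixedPoints f) =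
      (Finset.univ.filter fun C => Function.IsFixedPt f C).card := fun f =>
    Fintype.card_subtype _
  simp only [hcard]
  rw [Finset.card_filter _ (Finset.univ : Finset (Cosets F n)), Finset.sum_mul]
  refine (Finset.sum_card_bipartiteAbove_eq_sum_card_bipartiteBelow r).trans
    (Finset.sum_congr rfl fun C _ => ?_)
  simp only [Finset.bipartiteBelow, r, Finset.filter_filter]
  rw [Finset.filter_congr (q := fun v => Function.IsFixedPt (wordAct moveToFront l) C ∧
      v ∈ flagSpace C (Module.finrank F (lineWordSupp l) + 1) ∧ v ∉ lineWordSupp l) fun v _ => by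
    rw [and_comm, ← and_assoc, and_congr_left fun hv => isFixedPt_wordAct_moveToFront_cons hv C]]
  split_ifs with hC
  · have hX : lineWordSupp l ∈ flag C := hC.eq ▸ lineWordSupp_mem_flag_wordAct l C
    have hXle : lineWordSupp l ≤ flagSpace C (Module.finrank F (lineWordSupp l) + 1) :=
      (flagSpace_finrank hX).ge.trans (flagSpace_mono C (Nat.le_succ _))
    simp only [hC, true_and]
    rw [card_filter_mem_and_notMem hXle, finrank_flagSpace, min_eq_left hl, one_mul]
  · simp only [hC, false_and, Finset.filter_false, Finset.card_empty, zero_mul]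

theorem card_fixedPoints_wordAct_of_eq_top {l : List (Fin n → F)} (hl : lineWordSupp l = ⊤) :
    Fintype.card (Function.fixedPoints (wordAct (moveToFront (F := F)) l)) = 1 := by
  have hconst : ∀ C D : Cosets F n, wordAct moveToFront l C = wordAct moveToFront l D := by
    intro C D
    apply wordAct_moveToFront_congr
    simp only [hl, top_sup_eq, Set.Nonempty.image_const ⟨_, bot_mem_flag _⟩]
  refine Fintype.card_eq_one_iff.mpr ⟨⟨wordAct moveToFront l (QuotientGroup.mk 1), hconst _ _⟩, ?_⟩
  exact fun C => Subtype.ext (C.2.symm.trans (hconst _ _))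

theorem card_fixedPoints_wordAct (l : List (Fin n → F)) :
    Fintype.card (Function.fixedPoints (wordAct (moveToFront (F := F)) l)) =
      qFactorial (Fintype.card F) (Module.finrank F ((Fin n → F) ⧸ lineWordSupp l)) := by
  have hrank := (lineWordSupp l).finrank_quotient_add_finrank
  rw [Module.finrank_fin_fun] at hrank
  generalize hd : Module.finrank F ((Fin n → F) ⧸ lineWordSupp l) = d at *
  induction d generalizing l with
  | zero =>
    rw [qFactorial, Finset.prod_range_zero]
    exact card_fixedPoints_wordAct_of_eq_top
      (Submodule.eq_top_of_finrank_eq (by rw [Module.finrank_fin_fun]; omega))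
  | succ d ih =>
    have hcons : ∀ v ∉ lineWordSupp l,
        Fintype.card (Function.fixedPoints (wordAct (moveToFront (F := F)) (v :: l))) =
          qFactorial (Fintype.card F) d := fun v hv => by
      have hrank' : Module.finrank F (lineWordSupp (v :: l)) =
          Module.finrank F (lineWordSupp l) + 1 := by
        rw [← Submodule.finrank_sup_span_singleton hv, sup_comm]
        rfl
      have hquot := (lineWordSupp (v :: l)).finrank_quotient_add_finrank
      rw [Module.finrank_fin_fun] at hquot
      exact ih (v :: l) (by omega) (by omega)
    have hcount := sum_card_fixedPoints_wordAct_cons (l := l) (by omega)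
    rw [Finset.sum_congr rfl fun v hv => hcons v (Finset.mem_filter.mp hv).2, Finset.sum_const,
      smul_eq_mul] at hcount
    have hcompl : (Finset.univ.filter fun v => v ∉ lineWordSupp l).card =
        Fintype.card F ^ n - Fintype.card F ^ Module.finrank F (lineWordSupp l) := by
      simpa using card_filter_mem_and_notMem (le_top : lineWordSupp l ≤ ⊤)
    have hq : 0 < Fintype.card F - 1 := Nat.sub_pos_of_lt Fintype.one_lt_card
    have hq0 : 0 < Fintype.card F := Fintype.card_pos
    have hpow := pow_add_sub_pow (Fintype.card F) (Module.finrank F (lineWordSupp l)) (d + 1)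
    rw [add_comm _ (d + 1), hrank] at hpow
    rw [hcompl, hpow, pow_succ, ← Nat.mul_sub_one, ← mul_assoc, mul_assoc, ← qFactorial_succ,
      mul_comm] at hcount
    exact (Nat.eq_of_mul_eq_mul_right (by positivity) hcount).symm

end FixedPoints

section Operator

theorem IsPivot.pivotRow_eq {F : Type} [Field F] {n : ℕ} {v : Fin n → F} {i : Fin n}
    (hi : IsPivot v i) {D : Cosets F n} (hD : flagSpace D 1 = Submodule.span F {v}) :
    pivotRow F n D = i := by
  have hn : 0 < n := i.pos
  have hspan := flagSpace_succ D hn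
  rw [hD, flagSpace_zero, sup_bot_eq] at hspan
  obtain ⟨a, ha⟩ := Submodule.mem_span_singleton.mp
    (hspan ▸ Submodule.mem_span_singleton_self v)
  have hcol : ∀ j, (D.out : Matrix (Fin n) (Fin n) F) j ⟨0, hn⟩ ≠ 0 ↔ v j ≠ 0 := fun j => by
    have ha0 : a ≠ 0 := fun h => hi.1 (by rw [← ha, h, zero_smul, Pi.zero_apply])
    rw [← ha]
    exact (mul_ne_zero_iff_left ha0).symm
  have hmem := (hcol i).mpr hi.1
  refine le_antisymm (Nat.sInf_le ⟨i.2, hmem⟩) (le_csInf ⟨i, i.2, hmem⟩ ?_)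
  rintro j ⟨hj, hne⟩
  exact not_lt.mp fun hji => (hcol ⟨j, hj⟩).mp hne (hi.2 _ hji)

variable {F : Type} [Field F] [Fintype F] [DecidableEq F] {K : Type} [Field K] {n : ℕ}

theorem prodGenGB_succ_apply {k : ℕ} (h : k + 1 < n) (C D : Cosets F n) :
    prodGenGB F n K (k + 1) C D = ∑ t, prodGenGB F n K k (hop k h t C) D := by
  rw [prodGenGB, genGB_eq_sum_hop K h, Finset.sum_mul, Matrix.sum_apply]
  exact Finset.sum_congr rfl fun t _ =>
    congrFun₂ (Matrix.one_submatrix_mul (hop k h t) (Equiv.refl _) _) C D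

theorem card_filter_moveToFront_eq_sum_hop {k : ℕ} (h : k + 1 < n) (C D : Cosets F n) :
    (Finset.univ.filter fun v =>
        (v ∈ flagSpace C (k + 2) ∧ v ∉ flagSpace C (k + 1)) ∧ moveToFront v C = D).card =
      ∑ t, (Finset.univ.filter fun v =>
        (v ∈ flagSpace (hop k h t C) (k + 1) ∧ v ∉ flagSpace (hop k h t C) k) ∧
          moveToFront v (hop k h t C) = D).card := by
  let r : F → (Fin n → F) → Prop := fun t v => v ∈ flagSpace (hop k h t C) (k + 1)
  have hiff : ∀ t v, ((v ∈ flagSpace C (k + 2) ∧ v ∉ flagSpace C (k + 1)) ∧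
      moveToFront v C = D) ∧ r t v ↔
        (v ∈ flagSpace (hop k h t C) (k + 1) ∧ v ∉ flagSpace (hop k h t C) k) ∧
          moveToFront v (hop k h t C) = D := by
    intro t v
    rw [flagSpace_hop_of_ne h t C k.succ_ne_self.symm]
    constructor
    · rintro ⟨⟨⟨-, hvk⟩, rfl⟩, hvt⟩
      have hvk' : v ∉ flagSpace C k := fun hmem => hvk (flagSpace_mono C k.le_succ hmem)
      exact ⟨⟨hvt, hvk'⟩, moveToFront_hop h hvk' hvt⟩
    · rintro ⟨⟨hvt, hvk⟩, rfl⟩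
      exact ⟨⟨mem_and_notMem_of_mem_flagSpace_hop h hvt hvk, (moveToFront_hop h hvk hvt).symm⟩, hvt⟩
  simp only [← hiff, ← Finset.filter_filter _ (r _)]
  refine Eq.trans ?_ (Finset.sum_card_bipartiteAbove_eq_sum_card_bipartiteBelow r).symm
  rw [Finset.card_eq_sum_ones]
  refine Finset.sum_congr rfl fun v hv => ?_
  obtain ⟨⟨hv2, hv1⟩, -⟩ := (Finset.mem_filter_univ v).mp hv
  exact ((Fintype.existsUnique_iff_card_one _).mp (existsUnique_mem_flagSpace_hop h hv2 hv1)).symm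

theorem card_filter_moveToFront_zero (hn : 0 < n) (C D : Cosets F n) :
    ((Finset.univ.filter fun v =>
        (v ∈ flagSpace C 1 ∧ v ∉ flagSpace C 0) ∧ moveToFront v C = D).card : K) =
      (Fintype.card F - 1) * (1 : Matrix (Cosets F n) (Cosets F n) K) C D := by
  rw [Finset.filter_congr (q := fun v => (v ∈ flagSpace C 1 ∧ v ∉ flagSpace C 0) ∧ C = D)
    fun v _ => and_congr_right fun hv => by
      rw [flagSpace_zero, Submodule.mem_bot] at hv
      rw [moveToFront_of_mem_flagSpace_one hv.2 hv.1]]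
  obtain rfl | hCD := eq_or_ne C D
  · simp only [and_true]
    rw [card_filter_mem_and_notMem (flagSpace_mono C zero_le_one), finrank_flagSpace,
      finrank_flagSpace, min_eq_left hn, Nat.zero_min, pow_one, pow_zero,
      Nat.cast_pred Fintype.card_pos, Matrix.one_apply_eq, mul_one]
  · simp [hCD]

theorem card_sub_one_mul_prodGenGB {k : ℕ} (hk : k < n) (C D : Cosets F n) :
    ((Fintype.card F : K) - 1) * prodGenGB F n K k C D =
      ((Finset.univ.filter fun v =>
        (v ∈ flagSpace C (k + 1) ∧ v ∉ flagSpace C k) ∧ moveToFront v C = D).card : K) := by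
  induction k generalizing C with
  | zero => exact (card_filter_moveToFront_zero hk C D).symm
  | succ k ih =>
    rw [prodGenGB_succ_apply hk, card_filter_moveToFront_eq_sum_hop hk, Finset.mul_sum,
      Nat.cast_sum]
    exact Finset.sum_congr rfl fun t _ => ih (Nat.lt_of_succ_lt hk) _

theorem card_sub_one_mul_sum_prodGenGB (C D : Cosets F n) :
    ((Fintype.card F : K) - 1) * (∑ k ∈ Finset.range n, prodGenGB F n K k) C D =
      ((Finset.univ.filter fun v => v ≠ 0 ∧ moveToFront v C = D).card : K) := by
  let s : ℕ → Finset (Fin n → F) := fun k =>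
    Finset.univ.filter fun v => v ∈ flagSpace C k ∧ moveToFront v C = D
  have hdiff : ∀ {i j}, i ≤ j → ((Finset.univ.filter fun v =>
      (v ∈ flagSpace C j ∧ v ∉ flagSpace C i) ∧ moveToFront v C = D).card : K) =
        (s j).card - (s i).card := fun {i j} hij => by
    have hsub : s i ⊆ s j :=
      Finset.monotone_filter_right _ fun _ _ => And.imp_left fun hv => flagSpace_mono C hij hv
    rw [← Nat.cast_sub (Finset.card_le_card hsub), ← Finset.card_sdiff_of_subset hsub]
    congr 2
    ext v
    simp only [s, Finset.mem_filter_univ, Finset.mem_sdiff]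
    tauto
  have hends := hdiff (Nat.zero_le n)
  simp only [flagSpace_eq_top C le_rfl, flagSpace_zero, Submodule.mem_top, Submodule.mem_bot,
    true_and] at hends
  rw [hends, Matrix.sum_apply, Finset.mul_sum, ← Finset.sum_range_sub fun k => ((s k).card : K)]
  refine Finset.sum_congr rfl fun k hk => ?_
  rw [card_sub_one_mul_prodGenGB (Finset.mem_range.mp hk), hdiff k.le_succ]

theorem flagSpace_moveToFront_one {v : Fin n → F} (hv : v ≠ 0) (C : Cosets F n) :
    flagSpace (moveToFront v C) 1 = Submodule.span F {v} := by
  have hmem : Submodule.span F {v} ∈ flag (moveToFront v C) := by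
    rw [flag_moveToFront]
    exact Or.inr ⟨⊥, bot_mem_flag C, sup_bot_eq _⟩
  rw [← finrank_span_singleton (K := F) hv, flagSpace_finrank hmem]

theorem TGB_eq_walkMatrix [CharZero K] (x : Fin n → K) :
    TGB F n K x = walkMatrix moveToFront (pivotWeight (F := F) x) := by
  have hq : (Fintype.card F : K) - 1 ≠ 0 :=
    sub_ne_zero.mpr (Nat.cast_ne_one.mpr Fintype.one_lt_card.ne')
  have hX : ∀ {v : Fin n → F} {C}, v ≠ 0 →
      XGB F n K x (moveToFront v C) (moveToFront v C) = (Fintype.card F - 1) * pivotWeight x v := by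
    intro v C hv
    obtain ⟨i, hi⟩ := exists_isPivot hv
    have hrow := hi.pivotRow_eq (flagSpace_moveToFront_one hv C)
    rw [XGB, if_pos rfl, hi.pivotWeight_eq, mul_div_cancel₀ _ hq, dif_pos (hrow ▸ i.2)]
    simp only [hrow]
  have hzero : pivotWeight x (0 : Fin n → F) = 0 := by simp [pivotWeight, IsPivot]
  ext C D
  have hTX : TGB F n K x C D =
      (∑ k ∈ Finset.range n, prodGenGB F n K k) C D * XGB F n K x D D := by
    refine Finset.sum_eq_single D (fun E _ hE => ?_) (by simp)
    exact mul_eq_zero_of_right _ (if_neg hE.symm)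
  apply mul_left_cancel₀ hq
  rw [hTX, ← mul_assoc, card_sub_one_mul_sum_prodGenGB, walkMatrix, Matrix.sum_apply,
    Finset.mul_sum, ← nsmul_eq_mul, ← Finset.sum_const, Finset.sum_filter]
  refine Finset.sum_congr rfl fun v _ => ?_
  obtain rfl | hv := eq_or_ne v 0
  · simp [hzero]
  · obtain rfl | hD := eq_or_ne (moveToFront v C) D
    · simp [hv, hX hv, mapMatrix_apply]
    · simp [hD, mapMatrix_apply]

end Operator

section Spectrum

theorem multGB_univ (q n : ℕ) : multGB q n Finset.univ = 1 := by
  have hexp : ∀ i : Fin n, n - ((i : ℕ) + 1) -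
      (((Finset.univ : Finset (Fin n)).filter fun t => i ≤ t).card - 1) = 0 := fun i => by
    rw [Finset.filter_le_eq_Ici, Fin.card_Ici]
    omega
  rw [multGB, Finset.sum_eq_zero fun i _ => hexp i, Finset.card_univ, Fintype.card_fin,
    Nat.sub_self, qDerangeNum_zero, Int.toNat_one, pow_zero, mul_one]

theorem prod_pow_multGB {F : Type*} [Field F] [Fintype F] {n : ℕ} {M : Type*} [CommMonoid M]
    (g : Finset (Fin n) → M) :
    ∏ Y : Submodule F (Fin n → F), g (pivots Y) ^
        (qDerangeNum (Fintype.card F) (Module.finrank F ((Fin n → F) ⧸ Y))).toNat =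
      ∏ S, g S ^ multGB (Fintype.card F) n S := by
  simp only [Submodule.finrank_quotient, Module.finrank_fin_fun, finrank_eq_card_pivots]
  rw [prod_comp_pivots fun S => g S ^ (qDerangeNum (Fintype.card F) (n - S.card)).toNat]
  simp only [← pow_mul]
  rfl

variable {F : Type} [Field F] [Fintype F] [DecidableEq F] {n : ℕ} {K : Type} [Field K]
  [PartialOrder K] [IsStrictOrderedRing K] [PosMulReflectLT K] {x : Fin n → K}

theorem charpoly_TGB (hx : ∀ i, 0 ≤ x i) :
    (TGB F n K x).charpoly = ∏ S, (Polynomial.X -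
      Polynomial.C (lambdaS K n (Fintype.card F : K) x S)) ^ multGB (Fintype.card F) n S := by
  rw [TGB_eq_walkMatrix, charpoly_walkMatrix (pivotWeight_nonneg hx)
    (fun _ _ C hv => wordAct_moveToFront_absorb hv C)
    (fun l => (card_fixedPoints_wordAct l).trans (sum_filter_le_qDerangeNum_toNat _).symm)]
  simp only [weightBelow_pivotWeight]
  exact prod_pow_multGB fun S =>
    Polynomial.X - Polynomial.C (lambdaS K n (Fintype.card F : K) x S)

theorem exists_TGB_eq_mul_diagonal_mul_inv (hx : ∀ i, 0 ≤ x i) :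
    ∃ (P : Matrix (Cosets F n) (Cosets F n) K) (d : Cosets F n → K),
      IsUnit P.det ∧ TGB F n K x = P * Matrix.diagonal d * P⁻¹ := by
  rw [TGB_eq_walkMatrix]
  exact exists_walkMatrix_eq_mul_diagonal_mul_inv (pivotWeight_nonneg hx)
    fun _ _ C hv => wordAct_moveToFront_absorb hv C

end Spectrum

theorem qTsetlin_flags_charpoly_general (F : Type) [Field F] [Fintype F] [DecidableEq F]
    (K : Type) [Field K] [PartialOrder K] [IsStrictOrderedRing K] [PosMulReflectLT K]
    (n : ℕ) (x : Fin n → K) (hx : ∀ i, 0 ≤ x i) :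
    (Matrix.charpoly (TGB F n K x) =
      (Polynomial.X - Polynomial.C (lambdaS K n (Fintype.card F : K) x Finset.univ)) *
        ∏ S ∈ Finset.univ.filter fun S : Finset (Fin n) => S ≠ Finset.univ,
          (Polynomial.X - Polynomial.C (lambdaS K n (Fintype.card F : K) x S)) ^
            multGB (Fintype.card F) n S) ∧
    (∃ P D : Matrix (Cosets F n) (Cosets F n) K,
      IsUnit P.det ∧ D.IsDiag ∧ TGB F n K x = P * D * P⁻¹) := by
  constructor
  · rw [charpoly_TGB hx, Finset.filter_ne',
      ← Finset.mul_prod_erase _ _ (Finset.mem_univ Finset.univ), multGB_univ, pow_one]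
  · obtain ⟨P, d, hP, hT⟩ := exists_TGB_eq_mul_diagonal_mul_inv (F := F) hx
    exact ⟨P, Matrix.diagonal d, hP, Matrix.isDiag_diagonal d, hT⟩

/-- Let `q` be a prime power (the cardinality of the finite field `F`) and
`x` nonnegative real weights (viewed in `ℂ`).  The characteristic polynomial of the
transition matrix of `T_{G/B}(q,x)` equals
`(t - λ_{[n]}(q,x)) ∏_{S ⊊ [n]} (t - λ_S(q,x))^{m(S)}`, and `T_{G/B}(q,x)` is
diagonalizable. -/
theorem qTsetlin_flags_charpoly (F : Type) [Field F] [Fintype F] [DecidableEq F]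
    (n : ℕ) (x : Fin n → ℝ) (hx : ∀ i, 0 ≤ x i) :
    (Matrix.charpoly (TGB F n ℂ fun i => (x i : ℂ)) =
      (Polynomial.X -
          Polynomial.C (lambdaS ℂ n (Fintype.card F : ℂ) (fun i => (x i : ℂ)) Finset.univ)) *
        ∏ S ∈ Finset.univ.filter fun S : Finset (Fin n) => S ≠ Finset.univ,
          (Polynomial.X -
              Polynomial.C (lambdaS ℂ n (Fintype.card F : ℂ) (fun i => (x i : ℂ)) S)) ^
            multGB (Fintype.card F) n S) ∧
    (∃ P D : Matrix (Cosets F n) (Cosets F n) ℂ,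
      IsUnit P.det ∧ D.IsDiag ∧ TGB F n ℂ (fun i => (x i : ℂ)) = P * D * P⁻¹) := by
  open scoped ComplexOrder in
  exact qTsetlin_flags_charpoly_general F ℂ n _ fun i => Complex.zero_le_real.mpr (hx i)

end QTsetlin
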